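/- Let C be a commutative Noetherian ring with Krull dimension D < ∞ and let A = C[x_1,…,x_n]. Then for every r ≥ max(3, D+2) and every column b ∈ IUm_{2r}(A), the first standard basis column e_1 belongs to EO(2r,A)^{≤N} · b, where N = n(11r−7) + (nD + r(r−1)/2)·(r(r−1)/2 + ⌈(r−1)/2⌉ + 8r−2) + 8r−8. -/

import Mathlib

open Matrix

section EvenDefs

variable {R : Type*} [CommRing R]

/-- In the basis `e_1,…,e_r,e_{-r},…,e_{-1}` of `R^{2r}` (0-indexed by `Fin (2*r)`),
the position of `e_{-i}` given the position of `e_i` (and vice versa). -/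
def negE (r : ℕ) (i : Fin (2 * r)) : Fin (2 * r) := ⟨2 * r - 1 - i.val, by omega⟩

/-- The split quadratic form `q(x) = ∑_{i=1}^r x_i x_{-i}` on `R^{2r}`. -/
def quadE (r : ℕ) (x : Fin (2 * r) → R) : R :=
  ∑ i : Fin r, x ⟨i.val, by omega⟩ * x ⟨2 * r - 1 - i.val, by omega⟩

/-- The even split orthogonal group `O(2r,R)`, as a set of matrices. -/
def OE (r : ℕ) (R : Type*) [CommRing R] : Set (Matrix (Fin (2 * r)) (Fin (2 * r)) R) :=
  {g | IsUnit g ∧ ∀ x : Fin (2 * r) → R, quadE r (g.mulVec x) = quadE r x}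

/-- The elementary orthogonal transvection `T_{i,j}(ξ) = e + ξ e_{i,j} - ξ e_{-j,-i}`. -/
def TE (r : ℕ) (i j : Fin (2 * r)) (ξ : R) : Matrix (Fin (2 * r)) (Fin (2 * r)) R :=
  1 + ξ • Matrix.single i j 1 - ξ • Matrix.single (negE r j) (negE r i) 1

/-- Being an elementary orthogonal transvection (even case): `T_{i,j}(ξ)` with `i ≠ ±j`. -/
def IsElemE (r : ℕ) (g : Matrix (Fin (2 * r)) (Fin (2 * r)) R) : Prop :=
  ∃ i j : Fin (2 * r), ∃ ξ : R, i ≠ j ∧ i ≠ negE r j ∧ g = TE r i j ξ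

/-- `EO(2r,R)^{≤N}` : products of at most `N` elementary orthogonal transvections. -/
def EOE (r N : ℕ) (R : Type*) [CommRing R] : Set (Matrix (Fin (2 * r)) (Fin (2 * r)) R) :=
  {g | ∃ L : List (Matrix (Fin (2 * r)) (Fin (2 * r)) R),
    L.length ≤ N ∧ (∀ m ∈ L, IsElemE r m) ∧ g = L.prod}

/-- `IUm_{2r}(R)` : isotropic unimodular columns. -/
def IUmE (r : ℕ) (R : Type*) [CommRing R] : Set (Fin (2 * r) → R) :=
  {b | Ideal.span (Set.range b) = ⊤ ∧ quadE r b = 0}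

end EvenDefs

/-!
Multiplying a column by few transvections, one arranges by prime avoidance that the ideal spanned
by the entries at `2,…,r` contains a polynomial `g` that is monic in the iterated lexicographic
sense. For suitable `m_i`, the substitution `x_i ↦ X * (x_i + X ^ m_i - 1)` makes `g` monic in the
new variable `X`; it is the identity at `X = 1` and the constant term at `X = 0`. So it suffices
to move the value of the substituted column at `X = 1` to its value at `X = 0`.

Let `A` be the ring of polynomials. Given finitely many primes of `A`, further transvections make
the ideal of `A[X]` spanned by the first two entries contain a constant `s` outside these primes.
For such a column, the values at `X = τ` and at `X = τ + s ^ 4 * y` differ by a bounded number of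
transvections, because the difference of the two columns is divisible by a high enough power of
`s`. By prime avoidance `dim A + 1` constants `s ^ 4` generate the unit ideal, so all values of
the column lie in one orbit, with bounds depending only on `r` and `dim A`. The remaining constant
column is reduced by the stable range condition for the coefficient ring.
-/

section PrimeAvoidance

variable {A : Type*} [CommRing A]

theorem exists_mem_iff_not_of_isAntichain {M : Set (Ideal A)} (hfin : M.Finite)
    (hprime : ∀ m ∈ M, m.IsPrime) (hanti : IsAntichain (· ≤ ·) M) (q : Ideal A → Prop) :
    ∃ x : A, ∀ m ∈ M, x ∈ m ↔ ¬ q m := by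
  classical
  have separating : ∀ m ∈ M, ∃ x ∉ m, ∀ m' ∈ M, m' ≠ m → x ∈ m' := by
    intro m hm
    have hinf : ¬ (hfin.toFinset.erase m).inf id ≤ m := by
      rw [(hprime m hm).inf_le']
      rintro ⟨m', hm', hle⟩
      simp only [Finset.mem_erase, Set.Finite.mem_toFinset] at hm'
      exact hm'.1 (hanti.eq hm'.2 hm hle)
    obtain ⟨x, hx, hxm⟩ := Set.not_subset.mp hinf
    refine ⟨x, hxm, fun m' hm' hne => ?_⟩
    exact (Finset.inf_le (f := id) (by simp [hm', hne]) : _ ≤ m') hx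
  choose! x hx_notMem hx_mem using separating
  refine ⟨∑ m ∈ hfin.toFinset with q m, x m, fun m hm => ?_⟩
  have hrest : ∀ k ∈ hfin.toFinset.filter q, k ≠ m → x k ∈ m := by
    intro k hk hne
    simp only [Finset.mem_filter, Set.Finite.mem_toFinset] at hk
    exact hx_mem k hk.1 m hm hne.symm
  by_cases hq : q m
  · rw [← Finset.add_sum_erase _ _ (show m ∈ hfin.toFinset.filter q by simp [hm, hq]),
      Ideal.add_mem_iff_left _ (Ideal.sum_mem _ fun k hk =>
        hrest k (Finset.mem_of_mem_erase hk) (Finset.ne_of_mem_erase hk))]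
    simp [hq, hx_notMem m hm]
  · simp only [hq, not_false_eq_true, iff_true]
    refine Ideal.sum_mem _ fun k hk => hrest k hk ?_
    rintro rfl
    exact hq (Finset.mem_filter.mp hk).2

theorem isAntichain_minimalPrimes (I : Ideal A) : IsAntichain (· ≤ ·) I.minimalPrimes :=
  setOfPred_minimal_antichain _

theorem exists_forall_add_mul_notMem {M : Set (Ideal A)} (hfin : M.Finite)
    (hprime : ∀ m ∈ M, m.IsPrime) (hanti : IsAntichain (· ≤ ·) M) (a b : A) :
    ∃ x : A, ∀ m ∈ M, b ∉ m → a + x * b ∉ m := by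
  obtain ⟨x, hx⟩ := exists_mem_iff_not_of_isAntichain hfin hprime hanti (a ∈ ·)
  refine ⟨x, fun m hm hb hab => ?_⟩
  by_cases ha : a ∈ m
  · have hxb := (Ideal.add_mem_iff_right _ ha).mp hab
    exact (hx m hm).mp (((hprime m hm).mem_or_mem hxb).resolve_right hb) ha
  · have hxm := (hx m hm).mpr ha
    exact ha ((Ideal.add_mem_iff_left _ (m.mul_mem_right _ hxm)).mp hab)

theorem height_le_of_ringKrullDim_le {d : ℕ} (hd : ringKrullDim A ≤ d) (P : Ideal A) [P.IsPrime] :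
    P.height ≤ d := by
  exact_mod_cast Ideal.height_le_ringKrullDim_of_isPrime.trans hd

variable [IsNoetherianRing A]

theorem exists_forall_mem_or_card_le_height {κ : Type*} (K : Finset κ) (a : κ → A) (a₀ : A) :
    ∃ c : κ → A, ∀ P : Ideal A, P.IsPrime → (∀ k ∈ K, a k + c k * a₀ ∈ P) →
      a₀ ∈ P ∨ (K.card : ℕ∞) ≤ P.height := by
  classical
  induction K using Finset.induction_on with
  | empty => exact ⟨0, fun P _ _ => Or.inr (by simp)⟩
  | insert k K hk ih =>
    obtain ⟨c, hc⟩ := ih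
    set I : Ideal A := Ideal.span ((fun k => a k + c k * a₀) '' (K : Set κ)) with hI
    obtain ⟨x, hx⟩ := exists_forall_add_mul_notMem
      (Ideal.finite_minimalPrimes_of_isNoetherianRing A I) (fun m hm => hm.1.1)
      (isAntichain_minimalPrimes I) (a k) a₀
    refine ⟨Function.update c k x, fun P hP hmem => or_iff_not_imp_left.mpr fun h₀ => ?_⟩
    have hIP : I ≤ P := by
      rw [hI, Ideal.span_le]
      rintro _ ⟨j, hj, rfl⟩
      simpa [Function.update_of_ne (ne_of_mem_of_not_mem hj hk)] using
        hmem j (Finset.mem_insert_of_mem hj)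
    obtain ⟨Q, hQ, hQP⟩ := Ideal.exists_minimalPrimes_le hIP
    have : Q.IsPrime := hQ.1.1
    have hQ₀ : a₀ ∉ Q := fun h => h₀ (hQP h)
    have hlt : Q < P := lt_of_le_of_ne hQP <| by
      rintro rfl
      exact hx Q hQ hQ₀ (by simpa using hmem k (Finset.mem_insert_self _ _))
    have hQheight := (hc Q this fun j hj =>
      hQ.1.2 (Ideal.subset_span ⟨j, hj, rfl⟩)).resolve_left hQ₀
    rw [Finset.card_insert_of_notMem hk, Nat.cast_succ]
    exact (add_le_add_left hQheight 1).trans (Ideal.height_add_one_le_of_lt_of_isPrime hlt)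

theorem exists_list_ofList_eq_top {d : ℕ} (hd : ringKrullDim A ≤ d) (G : Set A)
    (hG : ∀ F : Set (Ideal A), F.Finite → (∀ p ∈ F, p.IsPrime) → IsAntichain (· ≤ ·) F →
      ∃ s ∈ G, ∀ p ∈ F, s ∉ p) :
    ∃ L : List A, L.length = d + 1 ∧ (∀ s ∈ L, s ∈ G) ∧ Ideal.ofList L = ⊤ := by
  have avoiding : ∀ i : ℕ, ∃ L : List A, L.length = i ∧ (∀ s ∈ L, s ∈ G) ∧
      ∀ P : Ideal A, P.IsPrime → Ideal.ofList L ≤ P → (i : ℕ∞) ≤ P.height := by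
    intro i
    induction i with
    | zero => exact ⟨[], rfl, by simp, by simp⟩
    | succ i ih =>
      obtain ⟨L, hlen, hLG, hheight⟩ := ih
      obtain ⟨s, hs, hs_notMem⟩ := hG (Ideal.ofList L).minimalPrimes
        (Ideal.finite_minimalPrimes_of_isNoetherianRing A _) (fun m hm => hm.1.1)
        (isAntichain_minimalPrimes _)
      refine ⟨s :: L, by simp [hlen], by simpa using ⟨hs, hLG⟩, fun P hP hle => ?_⟩
      rw [Ideal.ofList_cons, sup_le_iff, Ideal.span_singleton_le_iff_mem] at hle
      obtain ⟨Q, hQ, hQP⟩ := Ideal.exists_minimalPrimes_le hle.2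
      have : Q.IsPrime := hQ.1.1
      have hlt : Q < P := lt_of_le_of_ne hQP (by rintro rfl; exact hs_notMem _ hQ hle.1)
      rw [Nat.cast_succ]
      exact (add_le_add_left (hheight Q this hQ.1.2) 1).trans
        (Ideal.height_add_one_le_of_lt_of_isPrime hlt)
  obtain ⟨L, hlen, hLG, hheight⟩ := avoiding (d + 1)
  refine ⟨L, hlen, hLG, ?_⟩
  by_contra hne
  obtain ⟨P, hP, hle⟩ := Ideal.exists_le_maximal _ hne
  have := (hheight P hP.isPrime hle).trans (height_le_of_ringKrullDim_le hd P)
  norm_cast at this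
  lia

end PrimeAvoidance

section PolynomialHeight

open Polynomial

variable {R : Type*} [CommRing R]

theorem height_le_one_of_comap_C_eq_bot [IsDomain R] (P : Ideal R[X]) [P.IsPrime]
    (hP : P.comap C = ⊥) : P.height ≤ 1 := by
  let F := FractionRing R
  let _ : Algebra R[X] F[X] := Polynomial.algebra R F
  have : IsLocalization ((nonZeroDivisors R).map C) F[X] :=
    Polynomial.isLocalization (nonZeroDivisors R) F
  have hdisj : Disjoint (((nonZeroDivisors R).map C : Submonoid R[X]) : Set R[X]) P := by
    refine Set.disjoint_left.mpr ?_
    rintro _ ⟨x, hx, rfl⟩ hxP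
    have : x ∈ P.comap C := hxP
    exact nonZeroDivisors.ne_zero hx (by simpa [hP] using this)
  have : (P.map (algebraMap R[X] F[X])).IsPrime :=
    IsLocalization.isPrime_of_isPrime_disjoint _ _ P inferInstance hdisj
  rw [← IsLocalization.height_map_of_disjoint ((nonZeroDivisors R).map C) (S := F[X]) P hdisj]
  refine height_le_of_ringKrullDim_le ?_ _
  simp [Polynomial.ringKrullDim_of_isNoetherianRing, ringKrullDim_eq_zero_of_field]

theorem comap_C_map_C (p : Ideal R) : (p.map (C : R →+* R[X])).comap C = p := by
  ext a
  rw [Ideal.mem_comap, Ideal.mem_map_C_iff]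
  exact ⟨fun h => by simpa using h 0, fun h n => by rw [coeff_C]; split_ifs <;> simp [h]⟩

theorem le_map_comap_C_of_leadingCoeff_le {P : Ideal R[X]} (h : P.leadingCoeff ≤ P.comap C) :
    P ≤ (P.comap C).map C := by
  intro f hf
  induction hn : f.support.card using Nat.strong_induction_on generalizing f with
  | _ n ih =>
    obtain rfl | hf₀ := eq_or_ne f 0
    · exact zero_mem _
    have hlead : f.leadingCoeff ∈ P.comap C := h ((Ideal.mem_leadingCoeff _ _).mpr ⟨f, hf, rfl⟩)
    have herase : f.eraseLead ∈ P := by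
      rw [← self_sub_C_mul_X_pow]
      exact P.sub_mem hf (P.mul_mem_right _ hlead)
    rw [← f.eraseLead_add_C_mul_X_pow]
    exact add_mem (ih _ (hn ▸ eraseLead_support_card_lt hf₀) herase rfl)
      (Ideal.mul_mem_right _ _ (Ideal.mem_map_of_mem _ hlead))

variable [IsNoetherianRing R]

theorem height_le_height_comap_C_add_one (P : Ideal R[X]) [P.IsPrime] :
    P.height ≤ (P.comap C).height + 1 := by
  set p := P.comap C
  have hover : P.LiesOver p := ⟨rfl⟩
  let mkP := Ideal.Quotient.mk (p.map (C : R →+* R[X]))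
  have hle : p.map C ≤ P := Ideal.map_comap_le
  have hprime : (P.map mkP).IsPrime :=
    Ideal.map_isPrime_of_surjective Ideal.Quotient.mk_surjective (by rwa [Ideal.mk_ker])
  let e : (R ⧸ p)[X] ≃+* R[X] ⧸ p.map C := p.polynomialQuotientEquivQuotientPolynomial
  have hfiber : ((P.map mkP).comap e).comap C = ⊥ := by
    refine eq_bot_iff.mpr fun x hx => ?_
    obtain ⟨a, rfl⟩ := Ideal.Quotient.mk_surjective x
    have he : e (C (Ideal.Quotient.mk p a)) = mkP (C a) := by
      rw [← map_C]
      exact p.polynomialQuotientEquivQuotientPolynomial_map_mk (C a)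
    rw [Ideal.mem_comap, Ideal.mem_comap, he] at hx
    have ha : a ∈ p := (Ideal.mem_quotient_iff_mem hle).mp hx
    simpa using Ideal.Quotient.eq_zero_iff_mem.mpr ha
  have := Ideal.IsPrime.comap e (K := P.map mkP)
  calc P.height ≤ p.height + (P.map mkP).height := Ideal.height_le_height_add_of_liesOver p P
    _ = p.height + ((P.map mkP).comap e).height := by rw [RingEquiv.height_comap]
    _ ≤ p.height + 1 := by gcongr; exact height_le_one_of_comap_C_eq_bot _ hfiber

theorem height_map_C_of_isPrime (p : Ideal R) [p.IsPrime] :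
    (p.map (C : R →+* R[X])).height = p.height := by
  have hprime : (p.map (C : R →+* R[X])).IsPrime := Ideal.isPrime_map_C_of_isPrime
  have hover : (p.map (C : R →+* R[X])).LiesOver p := ⟨(comap_C_map_C p).symm⟩
  simp [Ideal.height_eq_height_add_of_liesOver_of_hasGoingDown p]

theorem height_le_of_leadingCoeff_le {P : Ideal R[X]} [P.IsPrime] {p : Ideal R} [p.IsPrime]
    (h : P.leadingCoeff ≤ p) : P.height ≤ p.height := by
  have hle : P.comap C ≤ P.leadingCoeff := fun a ha =>
    (Ideal.mem_leadingCoeff _ _).mpr ⟨C a, ha, leadingCoeff_C a⟩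
  by_cases hlead : P.leadingCoeff ≤ P.comap C
  · calc P.height ≤ ((P.comap C).map C).height :=
          Ideal.height_mono (le_map_comap_C_of_leadingCoeff_le hlead)
      _ = (P.comap C).height := height_map_C_of_isPrime _
      _ ≤ p.height := Ideal.height_mono (hle.trans h)
  · calc P.height ≤ (P.comap C).height + 1 := height_le_height_comap_C_add_one P
      _ ≤ p.height := Ideal.height_add_one_le_of_lt_of_isPrime
          ((hle.lt_of_not_ge hlead).trans_le h)

end PolynomialHeight

section LexMonic

open Polynomial

variable {K : Type*} [CommRing K]

/-- Lexicographically monic polynomials: the leading coefficient with respect to the first variable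
is lexicographically monic in the remaining ones, down to the constant `1`. -/
def IsLexMonic : ∀ {n : ℕ}, MvPolynomial (Fin n) K → Prop
  | 0, f => f = 1
  | n + 1, f => IsLexMonic (MvPolynomial.finSuccEquiv K n f).leadingCoeff

theorem isLexMonic_zero_iff {f : MvPolynomial (Fin 0) K} : IsLexMonic f ↔ f = 1 := Iff.rfl

theorem isLexMonic_succ_iff {n : ℕ} {f : MvPolynomial (Fin (n + 1)) K} :
    IsLexMonic f ↔ IsLexMonic (MvPolynomial.finSuccEquiv K n f).leadingCoeff := Iff.rfl

theorem isLexMonic_one (n : ℕ) : IsLexMonic (1 : MvPolynomial (Fin n) K) := by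
  induction n with
  | zero => rfl
  | succ n ih => simpa [isLexMonic_succ_iff] using ih

variable [Nontrivial K] {n : ℕ}

theorem IsLexMonic.ne_zero {f : MvPolynomial (Fin n) K} (hf : IsLexMonic f) : f ≠ 0 := by
  induction n with
  | zero => exact hf.trans_ne one_ne_zero
  | succ n ih =>
    rintro rfl
    exact ih (isLexMonic_succ_iff.mp hf) (by simp)

theorem IsLexMonic.mul {f g : MvPolynomial (Fin n) K} (hf : IsLexMonic f) (hg : IsLexMonic g) :
    IsLexMonic (f * g) := by
  induction n with
  | zero => rw [isLexMonic_zero_iff] at *; simp [hf, hg]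
  | succ n ih =>
    have hfg := ih hf hg
    rwa [isLexMonic_succ_iff, map_mul, leadingCoeff_mul' hfg.ne_zero]

variable (K n) in
/-- The lexicographically monic polynomials, as a multiplicative set. -/
def lexMonic : Submonoid (MvPolynomial (Fin n) K) where
  carrier := {f | IsLexMonic f}
  one_mem' := isLexMonic_one n
  mul_mem' := .mul

theorem mem_lexMonic {f : MvPolynomial (Fin n) K} : f ∈ lexMonic K n ↔ IsLexMonic f := Iff.rfl

theorem exists_add_mul_mem_lexMonic {f : MvPolynomial (Fin n) K} (hf : f ∈ lexMonic K n)
    (a : MvPolynomial (Fin n) K) : ∃ g, a + g * f ∈ lexMonic K n := by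
  cases n with
  | zero => exact ⟨1 - a, by simp [isLexMonic_zero_iff.mp hf]⟩
  | succ n =>
    let e := MvPolynomial.finSuccEquiv K n
    have hf₀ : e f ≠ 0 := by simpa using IsLexMonic.ne_zero hf
    have hlt : (e a).degree < (X ^ ((e a).natDegree + 1) * e f).degree := by
      rw [mul_comm, degree_mul_X_pow, degree_eq_natDegree hf₀]
      exact degree_le_natDegree.trans_lt (by norm_cast; lia)
    refine ⟨e.symm (X ^ ((e a).natDegree + 1)), ?_⟩
    rwa [mem_lexMonic, isLexMonic_succ_iff, map_add, map_mul, AlgEquiv.apply_symm_apply,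
      leadingCoeff_add_of_degree_lt hlt, mul_comm, leadingCoeff_mul_X_pow]

theorem height_le_of_disjoint_lexMonic [IsNoetherianRing K] {d : ℕ} (hd : ringKrullDim K ≤ d)
    (P : Ideal (MvPolynomial (Fin n) K)) [P.IsPrime]
    (hP : Disjoint (P : Set (MvPolynomial (Fin n) K)) (lexMonic K n)) : P.height ≤ d := by
  induction n with
  | zero => exact height_le_of_ringKrullDim_le (le_of_eq_of_le (by simp) hd) P
  | succ n ih =>
    let e := (MvPolynomial.finSuccEquiv K n).toRingEquiv
    have hlead : Disjoint ((P.comap e.symm).leadingCoeff : Set (MvPolynomial (Fin n) K))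
        (lexMonic K n) := by
      refine Set.disjoint_left.mpr fun a ha ha_monic => ?_
      obtain ⟨f, hf, rfl⟩ := (Ideal.mem_leadingCoeff _ _).mp ha
      refine Set.disjoint_left.mp hP hf (isLexMonic_succ_iff.mpr ?_)
      rwa [SetLike.mem_coe, mem_lexMonic, ← e.apply_symm_apply f] at ha_monic
    obtain ⟨p, hp, hle, hp_disj⟩ := Ideal.exists_le_prime_disjoint _ _ hlead
    have := Ideal.IsPrime.comap e.symm (K := P)
    calc P.height = (P.comap e.symm).height := (RingEquiv.height_comap _ _).symm
      _ ≤ p.height := height_le_of_leadingCoeff_le hle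
      _ ≤ d := ih p hp_disj

end LexMonic

section Homotopy

open Polynomial

theorem exists_monic_eval₂_mul_add_X_pow_sub_one {A B : Type*} [CommRing A] [Nontrivial A]
    [CommRing B] (ψ : B →+* A[X]) (f : B[X]) (hf : (ψ f.leadingCoeff).Monic) (x : A) :
    ∃ m : ℕ, (f.eval₂ ψ (X * (C x + X ^ m - 1))).Monic := by
  set E := (Finset.range f.natDegree).sup fun k => (ψ (f.coeff k)).natDegree
  refine ⟨E + 1, ?_⟩
  set Φ : A[X] := X * (C x + X ^ (E + 1) - 1) with hΦ
  have hfactor : (C x + X ^ (E + 1) - 1 : A[X]) = X ^ (E + 1) + C (x - 1) := by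
    rw [C_sub, C_1]; ring
  have hfactor_monic : (X ^ (E + 1) + C (x - 1) : A[X]).Monic := monic_X_pow_add_C _ (by lia)
  have hΦ_monic : Φ.Monic := by rw [hΦ, hfactor]; exact monic_X.mul hfactor_monic
  have hΦ_natDegree : Φ.natDegree = E + 2 := by
    rw [hΦ, hfactor, monic_X.natDegree_mul hfactor_monic, natDegree_X, natDegree_X_pow_add_C]
    ring
  have hlead_monic : (ψ f.leadingCoeff * Φ ^ f.natDegree).Monic := hf.mul (hΦ_monic.pow _)
  have hlead_natDegree :
      f.natDegree * (E + 2) ≤ (ψ f.leadingCoeff * Φ ^ f.natDegree).natDegree := by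
    rw [hf.natDegree_mul (hΦ_monic.pow _), hΦ_monic.natDegree_pow, hΦ_natDegree]
    lia
  rw [eval₂_eq_sum_range, Finset.sum_range_succ, add_comm]
  refine hlead_monic.add_of_left ?_
  rw [degree_eq_natDegree hlead_monic.ne_zero]
  refine (degree_sum_le _ _).trans_lt ((Finset.sup_lt_iff (WithBot.bot_lt_coe _)).mpr ?_)
  refine fun k hk => degree_le_natDegree.trans_lt (Nat.cast_lt.mpr ?_)
  calc (ψ (f.coeff k) * Φ ^ k).natDegree
      ≤ (ψ (f.coeff k)).natDegree + (Φ ^ k).natDegree := natDegree_mul_le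
    _ ≤ E + k * (E + 2) := by
      rw [hΦ_monic.natDegree_pow, hΦ_natDegree]
      gcongr
      exact Finset.le_sup (f := fun k => (ψ (f.coeff k)).natDegree) hk
    _ < (k + 1) * (E + 2) := by lia
    _ ≤ f.natDegree * (E + 2) := Nat.mul_le_mul_right _ (Finset.mem_range.mp hk)
    _ ≤ _ := hlead_natDegree

variable {K A : Type*} [CommRing K] [CommRing A] [Algebra K A] {n : ℕ}

variable (K) in
/-- The substitution `x_i ↦ X (x_i + X ^ m_i - 1)`. At `X = 1` it is `x_i ↦ x_i` and at `X = 0` it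
is `x_i ↦ 0`, while for fast growing `m` it makes lexicographically monic polynomials monic. -/
noncomputable def homotopy (x : Fin n → A) (m : Fin n → ℕ) : MvPolynomial (Fin n) K →ₐ[K] A[X] :=
  MvPolynomial.aeval fun i => X * (C (x i) + X ^ m i - 1)

theorem eval_homotopy (x : Fin n → A) (m : Fin n → ℕ) (f : MvPolynomial (Fin n) K) (t : A) :
    (homotopy K x m f).eval t = MvPolynomial.aeval (fun i => t * (x i + t ^ m i - 1)) f := by
  have := DFunLike.congr_fun (MvPolynomial.comp_aeval
    (fun i => (X * (C (x i) + X ^ m i - 1) : A[X])) ((aeval t).restrictScalars K)) f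
  simpa [homotopy, coe_aeval_eq_eval] using this

theorem eval_one_homotopy (x : Fin n → A) (m : Fin n → ℕ) (f : MvPolynomial (Fin n) K) :
    (homotopy K x m f).eval 1 = MvPolynomial.aeval x f := by
  simp [eval_homotopy]

theorem eval_zero_homotopy (x : Fin n → A) (m : Fin n → ℕ) (f : MvPolynomial (Fin n) K) :
    (homotopy K x m f).eval 0 = algebraMap K A (MvPolynomial.constantCoeff f) := by
  simp [eval_homotopy, ← Pi.zero_def]

theorem homotopy_succ (x : Fin (n + 1) → A) (m : Fin (n + 1) → ℕ)
    (f : MvPolynomial (Fin (n + 1)) K) :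
    homotopy K x m f = (MvPolynomial.finSuccEquiv K n f).eval₂
      (homotopy K (Fin.tail x) (Fin.tail m) : MvPolynomial (Fin n) K →+* A[X])
      (X * (C (x 0) + X ^ m 0 - 1)) := by
  induction f using MvPolynomial.induction_on with
  | C a => simp [homotopy, MvPolynomial.finSuccEquiv_apply]
  | add p q hp hq => simp [hp, hq, eval₂_add]
  | mul_X p i hp =>
    rw [map_mul, map_mul, eval₂_mul, hp]
    refine congrArg _ (Fin.cases ?_ (fun j => ?_) i)
    · simp [homotopy, MvPolynomial.finSuccEquiv_X_zero]
    · simp [homotopy, MvPolynomial.finSuccEquiv_X_succ, Fin.tail]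

theorem exists_monic_homotopy [Nontrivial A] (n : ℕ) (f : MvPolynomial (Fin n) K)
    (hf : IsLexMonic f) (x : Fin n → A) : ∃ m : Fin n → ℕ, (homotopy K x m f).Monic := by
  induction n with
  | zero => exact ⟨0, by simp [show f = 1 from hf]⟩
  | succ n ih =>
    obtain ⟨m, hm⟩ := ih _ hf (Fin.tail x)
    obtain ⟨m₀, hm₀⟩ := exists_monic_eval₂_mul_add_X_pow_sub_one _ _ hm (x 0)
    exact ⟨Fin.cons m₀ m, by simpa [homotopy_succ] using hm₀⟩

end Homotopy

section Transvections

/-- The index set `{±i | i ∈ ι}` of a hyperbolic basis: `⟨i, true⟩` stands for `i` and `⟨i, false⟩`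
for `-i`. -/
@[ext]
structure SignedIndex (ι : Type*) where
  idx : ι
  sign : Bool
  deriving DecidableEq, Fintype

namespace SignedIndex

variable {ι : Type*}

instance : InvolutiveNeg (SignedIndex ι) where
  neg i := ⟨i.idx, !i.sign⟩
  neg_neg i := by cases i; simp

@[simp] theorem neg_mk (i : ι) (s : Bool) : -(⟨i, s⟩ : SignedIndex ι) = ⟨i, !s⟩ := rfl

@[simp] theorem ne_neg_self (i : SignedIndex ι) : i ≠ -i := by
  rcases i with ⟨i, _ | _⟩ <;> simp

theorem ne_of_idx_ne {i j : SignedIndex ι} (h : i.idx ≠ j.idx) : i ≠ j := fun hij => h (hij ▸ rfl)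

theorem ne_neg_of_idx_ne {i j : SignedIndex ι} (h : i.idx ≠ j.idx) : i ≠ -j :=
  ne_of_idx_ne (j := -j) h

theorem idx_ne_iff {i j : SignedIndex ι} : i.idx ≠ j.idx ↔ i ≠ j ∧ i ≠ -j := by
  rcases i with ⟨i, _ | _⟩ <;> rcases j with ⟨j, _ | _⟩ <;> simp

end SignedIndex

open SignedIndex

variable {ι R : Type*} [CommRing R]

/-- The split quadratic form `∑ x_i x_{-i}`. -/
def splitForm [Fintype ι] (b : SignedIndex ι → R) : R :=
  ∑ k, b ⟨k, true⟩ * b ⟨k, false⟩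

theorem mul_apply_neg (b : SignedIndex ι → R) (i : SignedIndex ι) :
    b ⟨i.idx, true⟩ * b ⟨i.idx, false⟩ = b i * b (-i) := by
  rcases i with ⟨i, _ | _⟩
  exacts [mul_comm _ _, rfl]

theorem map_splitForm [Fintype ι] {R' : Type*} [CommRing R'] (φ : R →+* R')
    (b : SignedIndex ι → R) : splitForm (fun k => φ (b k)) = φ (splitForm b) := by
  simp [splitForm]

theorem mul_sub_add_mul_sub_eq_zero [Fintype ι] {a₁ a₂ : ι} (ha : a₁ ≠ a₂)
    {b b' : SignedIndex ι → R} (hb : ∀ k, k ≠ ⟨a₁, false⟩ → k ≠ ⟨a₂, false⟩ → b k = b' k)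
    (hq : splitForm b' = splitForm b) :
    b' ⟨a₁, true⟩ * (b' ⟨a₁, false⟩ - b ⟨a₁, false⟩) +
      b' ⟨a₂, true⟩ * (b' ⟨a₂, false⟩ - b ⟨a₂, false⟩) = 0 := by
  rw [← sub_eq_zero, splitForm, splitForm, ← Finset.sum_sub_distrib,
    Fintype.sum_eq_add a₁ a₂ ha] at hq
  · rw [← hq, hb ⟨a₁, true⟩ (by simp) (by simp), hb ⟨a₂, true⟩ (by simp) (by simp)]
    ring
  · rintro k ⟨hk₁, hk₂⟩
    rw [hb _ (by simp) (by simp), hb _ (by simp [hk₁]) (by simp [hk₂]), sub_self]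

variable [DecidableEq ι]

/-- The action of the elementary transvection `T_{i,j}(ξ)` on a column. -/
def transvect (i j : SignedIndex ι) (ξ : R) (b : SignedIndex ι → R) : SignedIndex ι → R :=
  fun k => b k + (if k = i then ξ * b j else 0) - (if k = -j then ξ * b (-i) else 0)

section

variable {i j k : SignedIndex ι} {ξ : R} {b : SignedIndex ι → R}

theorem transvect_apply_left (h : i.idx ≠ j.idx) : transvect i j ξ b i = b i + ξ * b j := by
  simp [transvect, ne_neg_of_idx_ne h]

theorem transvect_apply_neg_right (h : i.idx ≠ j.idx) :
    transvect i j ξ b (-j) = b (-j) - ξ * b (-i) := by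
  simp [transvect, (ne_of_idx_ne (i := i) (j := -j) h).symm]

theorem transvect_apply_of_ne (hi : k ≠ i) (hj : k ≠ -j) : transvect i j ξ b k = b k := by
  simp [transvect, hi, hj]

theorem transvect_neg_transvect (h : i.idx ≠ j.idx) :
    transvect i j (-ξ) (transvect i j ξ b) = b := by
  have hj : transvect i j ξ b j = b j :=
    transvect_apply_of_ne (ne_of_idx_ne h).symm (ne_neg_self j)
  have hi : transvect i j ξ b (-i) = b (-i) :=
    transvect_apply_of_ne (ne_neg_self i).symm (by simpa using ne_of_idx_ne h)
  ext k
  rw [transvect, hi, hj, transvect]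
  split_ifs <;> ring

theorem transvect_apply_mem_iff {I : Ideal R} (hξ : ξ ∈ I) :
    transvect i j ξ b k ∈ I ↔ b k ∈ I := by
  have hite : ∀ (p : Prop) [Decidable p] (y : R), (if p then ξ * y else 0) ∈ I := by
    intro p _ y
    split_ifs
    exacts [I.mul_mem_right _ hξ, I.zero_mem]
  rw [transvect, Submodule.sub_mem_iff_left _ (hite _ _), Submodule.add_mem_iff_left _ (hite _ _)]

theorem map_transvect {R' : Type*} [CommRing R'] (φ : R →+* R') :
    (fun k => φ (transvect i j ξ b k)) = transvect i j (φ ξ) fun k => φ (b k) := by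
  ext k
  simp [transvect, apply_ite φ]

theorem span_range_transvect_le :
    Ideal.span (Set.range (transvect i j ξ b)) ≤ Ideal.span (Set.range b) := by
  have hb : ∀ l, b l ∈ Ideal.span (Set.range b) := fun l => Ideal.subset_span ⟨l, rfl⟩
  rw [Ideal.span_le]
  rintro _ ⟨k, rfl⟩
  unfold transvect
  refine Ideal.sub_mem _ (Ideal.add_mem _ (hb k) ?_) ?_ <;> split_ifs
  exacts [Ideal.mul_mem_left _ _ (hb _), zero_mem _, Ideal.mul_mem_left _ _ (hb _), zero_mem _]

end

theorem splitForm_transvect [Fintype ι] {i j : SignedIndex ι} (h : i.idx ≠ j.idx) (ξ : R)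
    (b : SignedIndex ι → R) : splitForm (transvect i j ξ b) = splitForm b := by
  have hother : ∀ k, k ≠ i.idx ∧ k ≠ j.idx → ∀ s, transvect i j ξ b ⟨k, s⟩ = b ⟨k, s⟩ := by
    refine fun k hk s => transvect_apply_of_ne ?_ ?_
    exacts [ne_of_idx_ne hk.1, ne_of_idx_ne (j := -j) hk.2]
  rw [← sub_eq_zero, splitForm, splitForm, ← Finset.sum_sub_distrib,
    Fintype.sum_eq_add i.idx j.idx h fun k hk => by simp [hother k hk]]
  simp only [mul_apply_neg]
  rw [transvect_apply_left h, transvect_apply_neg_right h,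
    transvect_apply_of_ne (ne_neg_self i).symm (by simpa using ne_of_idx_ne h),
    transvect_apply_of_ne (ne_of_idx_ne h).symm (ne_neg_self j)]
  ring

/-- `EOReach N b c`: the column `c` arises from `b` by at most `N` elementary transvections. -/
inductive EOReach : ℕ → (SignedIndex ι → R) → (SignedIndex ι → R) → Prop
  | refl (N : ℕ) (b : SignedIndex ι → R) : EOReach N b b
  | step {N : ℕ} {b c : SignedIndex ι → R} (i j : SignedIndex ι) (ξ : R) (hij : i.idx ≠ j.idx)
      (h : EOReach N (transvect i j ξ b) c) : EOReach (N + 1) b c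

namespace EOReach

variable {M N : ℕ} {b c d : SignedIndex ι → R}

theorem mono (h : EOReach M b c) (hMN : M ≤ N) : EOReach N b c := by
  induction h generalizing N with
  | refl => exact refl _ _
  | step i j ξ hij _ ih =>
    obtain ⟨N, rfl⟩ := Nat.exists_eq_add_of_lt hMN
    exact step i j ξ hij (ih (by lia))

theorem trans (h : EOReach M b c) (h' : EOReach N c d) : EOReach (M + N) b d := by
  induction h with
  | refl => exact h'.mono (by lia)
  | step i j ξ hij _ ih => exact (step i j ξ hij (ih h')).mono (by lia)

theorem single {i j : SignedIndex ι} (hij : i.idx ≠ j.idx) (ξ : R) (b : SignedIndex ι → R) :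
    EOReach 1 b (transvect i j ξ b) :=
  step i j ξ hij (refl 0 _)

theorem symm (h : EOReach N b c) : EOReach N c b := by
  induction h with
  | refl => exact refl _ _
  | @step N b c i j ξ hij _ ih =>
    have hback := single hij (-ξ) (transvect i j ξ b)
    rw [transvect_neg_transvect hij] at hback
    exact ih.trans hback

theorem splitForm_eq [Fintype ι] (h : EOReach N b c) : splitForm c = splitForm b := by
  induction h with
  | refl => rfl
  | step i j ξ hij _ ih => rw [ih, splitForm_transvect hij]

theorem span_range_le (h : EOReach N b c) :
    Ideal.span (Set.range c) ≤ Ideal.span (Set.range b) := by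
  induction h with
  | refl => exact le_rfl
  | step i j ξ _ _ ih => exact ih.trans span_range_transvect_le

theorem span_range_eq (h : EOReach N b c) :
    Ideal.span (Set.range c) = Ideal.span (Set.range b) :=
  h.span_range_le.antisymm h.symm.span_range_le

theorem map {R' : Type*} [CommRing R'] (φ : R →+* R') (h : EOReach N b c) :
    EOReach N (fun k => φ (b k)) fun k => φ (c k) := by
  induction h with
  | refl => exact refl _ _
  | step i j ξ hij _ ih => exact step i j (φ ξ) hij (by rwa [← map_transvect])

end EOReach

/-- The product of the transvections `T_{⟨k, s⟩, i}(c k)` over `k ∈ K`, acting on a column: it adds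
multiples of the entry at `i` to the entries of sign `s` over `K`, at the expense of the entry at
`-i`. -/
def eichler (i : SignedIndex ι) (s : Bool) (K : Finset ι) (c : ι → R) (b : SignedIndex ι → R) :
    SignedIndex ι → R :=
  fun k => if k = -i then b k - ∑ l ∈ K, c l * b ⟨l, !s⟩
    else if k.sign = s ∧ k.idx ∈ K then b k + c k.idx * b i else b k

section

variable {i : SignedIndex ι} {s : Bool} {K : Finset ι} {c : ι → R} {b : SignedIndex ι → R}

theorem eichler_apply_of_neg_eq {k : SignedIndex ι} (hk : -i = k) :
    eichler i s K c b k = b k - ∑ l ∈ K, c l * b ⟨l, !s⟩ :=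
  if_pos hk.symm

theorem eichler_apply_of_mem {k : ι} (hi : i.idx ∉ K) (hk : k ∈ K) :
    eichler i s K c b ⟨k, s⟩ = b ⟨k, s⟩ + c k * b i := by
  have : (⟨k, s⟩ : SignedIndex ι) ≠ -i := ne_of_idx_ne (ne_of_mem_of_not_mem hk hi)
  simp [eichler, this, hk]

theorem eichler_apply_of_ne {k : SignedIndex ι} (hk : k ≠ -i) (hK : k.sign = s → k.idx ∉ K) :
    eichler i s K c b k = b k := by
  rw [eichler, if_neg hk, if_neg fun h => hK h.1 h.2]

theorem eoReach_eichler (hi : i.idx ∉ K) : EOReach K.card b (eichler i s K c b) := by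
  induction K using Finset.induction_on with
  | empty =>
    have : eichler i s ∅ c b = b := by ext k; simp [eichler]
    rw [this]
    exact .refl _ _
  | insert l K hl ih =>
    obtain ⟨hil, hiK⟩ : i.idx ≠ l ∧ i.idx ∉ K := by simpa using hi
    rw [Finset.card_insert_of_notMem hl]
    convert (ih hiK).trans (.single (i := ⟨l, s⟩) (j := i) hil.symm (c l) _) using 1
    have hl' : eichler i s K c b (-⟨l, s⟩) = b ⟨l, !s⟩ :=
      eichler_apply_of_ne (ne_of_idx_ne (j := -i) hil.symm) (by simp)
    have hi' : eichler i s K c b i = b i := eichler_apply_of_ne (ne_neg_self i) fun _ => hiK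
    ext k
    rcases eq_or_ne k (-i) with rfl | hki
    · rw [transvect_apply_neg_right hil.symm, eichler_apply_of_neg_eq rfl,
        eichler_apply_of_neg_eq rfl, Finset.sum_insert hl, hl']
      ring
    rcases eq_or_ne k ⟨l, s⟩ with rfl | hkl
    · rw [transvect_apply_left hil.symm, eichler_apply_of_ne hki fun _ => hl, hi',
        eichler_apply_of_mem hi (Finset.mem_insert_self l K)]
    · rw [transvect_apply_of_ne hkl hki]
      have : k.sign = s → k.idx ≠ l := fun hs hkl' => hkl (SignedIndex.ext hkl' hs)
      by_cases hs : k.sign = s <;> simp [eichler, hki, hs, this]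

end

end Transvections

section StableRange

variable {ι κ A : Type*} [CommRing A] {S : Submonoid A}

/-- The entries of the column `b` over `J` become unimodular after inverting `S`. -/
def UnimodularOn (S : Submonoid A) (J : Set κ) (b : κ → A) : Prop :=
  ∃ g ∈ S, g ∈ Ideal.span (b '' J)

theorem unimodularOn_iff {J : Set κ} {b : κ → A} :
    UnimodularOn S J b ↔
      ∀ P : Ideal A, P.IsPrime → Disjoint (P : Set A) S → ∃ k ∈ J, b k ∉ P := by
  constructor
  · rintro ⟨g, hgS, hg⟩ P _ hPS
    by_contra! hall
    exact Set.disjoint_left.mp hPS (Ideal.span_le.mpr (Set.image_subset_iff.mpr hall) hg) hgS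
  · intro h
    by_contra hS
    obtain ⟨P, hP, hle, hdisj⟩ := Ideal.exists_le_prime_disjoint (Ideal.span (b '' J)) S
      (Set.disjoint_left.mpr fun g hg hgS => hS ⟨g, hgS, hg⟩)
    obtain ⟨k, hk, hkP⟩ := h P hP hdisj
    exact hkP (hle (Ideal.subset_span (Set.mem_image_of_mem b hk)))

theorem unimodularOn_univ_of_span_range_eq_top {b : κ → A} (hb : Ideal.span (Set.range b) = ⊤) :
    UnimodularOn S Set.univ b :=
  ⟨1, S.one_mem, by simp [Set.image_univ, hb]⟩

theorem exists_forall_mem_of_disjoint [IsNoetherianRing A] {d : ℕ}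
    (hS : ∀ P : Ideal A, P.IsPrime → Disjoint (P : Set A) S → P.height ≤ d)
    {K : Finset κ} (hK : d < K.card) (a : κ → A) (a₀ : A) :
    ∃ c : κ → A, ∀ P : Ideal A, P.IsPrime → Disjoint (P : Set A) S →
      (∀ k ∈ K, a k + c k * a₀ ∈ P) → a₀ ∈ P := by
  obtain ⟨c, hc⟩ := exists_forall_mem_or_card_le_height K a a₀
  refine ⟨c, fun P hP hPS hk => (hc P hP hk).resolve_right fun h => hK.not_ge ?_⟩
  exact_mod_cast h.trans (hS P hP hPS)

variable [Fintype ι] [DecidableEq ι] (o : ι)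

theorem notMem_compl_singleton_idx (s : Bool) :
    (⟨o, s⟩ : SignedIndex ι).idx ∉ ({o}ᶜ : Finset ι) := by
  simp

variable {o} {b : SignedIndex ι → A}

theorem exists_eoReach_unimodularOn_compl_singleton [IsNoetherianRing A] {d : ℕ}
    (hS : ∀ P : Ideal A, P.IsPrime → Disjoint (P : Set A) S → P.height ≤ d)
    (ho : d < ({o}ᶜ : Finset ι).card) (hb : Ideal.span (Set.range b) = ⊤) :
    ∃ c, EOReach ({o}ᶜ : Finset ι).card b c ∧ UnimodularOn S {⟨o, true⟩}ᶜ c := by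
  have hoK := notMem_compl_singleton_idx o true
  obtain ⟨c, hc⟩ := exists_forall_mem_of_disjoint hS ho (fun k => b ⟨k, false⟩) (b ⟨o, true⟩)
  have hreach := eoReach_eichler (s := false) (c := c) (b := b) hoK
  refine ⟨_, hreach, unimodularOn_iff.mpr fun P hP hPS => ?_⟩
  by_contra! hmem
  have hbo : b ⟨o, true⟩ ∈ P := by
    refine hc P hP hPS fun k hk => ?_
    simpa [eichler_apply_of_mem hoK hk] using hmem ⟨k, false⟩ (by simp)
  obtain ⟨k, -, hk⟩ := unimodularOn_iff.mp
    (unimodularOn_univ_of_span_range_eq_top (hreach.span_range_eq.trans hb)) P hP hPS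
  rcases eq_or_ne k ⟨o, true⟩ with rfl | hko
  · exact hk (by rwa [eichler_apply_of_ne (by simp) (by simp)])
  · exact hk (hmem k hko)

theorem exists_eoReach_unimodularOn_true_or_eq
    (hS : ∀ σ ∈ S, ∀ a, ∃ g, a + g * σ ∈ S) (hb : UnimodularOn S {⟨o, true⟩}ᶜ b) :
    ∃ c, EOReach ({o}ᶜ : Finset ι).card b c ∧
      UnimodularOn S {k | k.sign = true ∨ k = ⟨o, false⟩} c := by
  have hoK := notMem_compl_singleton_idx o false
  obtain ⟨σ, hσS, hσ⟩ := hb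
  have hsub : ({⟨o, true⟩}ᶜ : Set (SignedIndex ι)) ⊆
      {k | k ≠ ⟨o, true⟩ ∧ (k.sign = true ∨ k = ⟨o, false⟩)} ∪
        (⟨·, false⟩) '' (({o}ᶜ : Finset ι) : Set ι) := by
    rintro ⟨k, _ | _⟩ hk <;> by_cases hko : k = o <;> simp_all
  replace hσ := Ideal.span_mono (Set.image_mono (f := b) hsub) hσ
  rw [Set.image_union, Ideal.span_union, ← Set.image_comp] at hσ
  obtain ⟨x, hx, y, hy, rfl⟩ := Submodule.mem_sup.mp hσ
  obtain ⟨h, rfl⟩ := (Submodule.mem_span_image_finset_iff_exists_fun' A).mp hy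
  obtain ⟨g, hg⟩ := hS _ hσS (b ⟨o, true⟩)
  refine ⟨_, eoReach_eichler (s := true) (c := fun k => -(g * h k)) hoK, _, hg, ?_⟩
  set c := eichler ⟨o, false⟩ true {o}ᶜ (fun k => -(g * h k)) b
  set I := Ideal.span (c '' {k | k.sign = true ∨ k = ⟨o, false⟩})
  have hcI : ∀ k, k.sign = true ∨ k = ⟨o, false⟩ → c k ∈ I := fun k hk =>
    Ideal.subset_span ⟨k, hk, rfl⟩
  have hbo : b ⟨o, false⟩ ∈ I := by
    rw [← show c ⟨o, false⟩ = b ⟨o, false⟩ from eichler_apply_of_ne (by simp) (by simp)]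
    exact hcI _ (.inr rfl)
  have hxI : x ∈ I := by
    refine Ideal.span_le.mpr ?_ hx
    rintro _ ⟨⟨k, s⟩, ⟨hko, hk⟩, rfl⟩
    rcases hk with rfl | hk
    · have hkK : k ∈ ({o}ᶜ : Finset ι) := by simpa using hko
      have := hcI ⟨k, true⟩ (.inl rfl)
      rwa [show c ⟨k, true⟩ = _ from eichler_apply_of_mem hoK hkK,
        I.add_mem_iff_left (I.mul_mem_left _ hbo)] at this
    · exact hk ▸ hbo
  have hco : c ⟨o, true⟩ = b ⟨o, true⟩ + g * ∑ k ∈ {o}ᶜ, h k * b ⟨k, false⟩ := by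
    rw [show c ⟨o, true⟩ = _ from eichler_apply_of_neg_eq rfl, Finset.mul_sum]
    simp [mul_assoc]
  convert I.add_mem (hcI ⟨o, true⟩ (.inl rfl)) (I.mul_mem_left g hxI) using 1
  rw [hco]
  simp only [smul_eq_mul, Function.comp_apply]
  ring

theorem exists_eoReach_unimodularOn_true [IsNoetherianRing A] {d : ℕ}
    (hS : ∀ P : Ideal A, P.IsPrime → Disjoint (P : Set A) S → P.height ≤ d)
    (ho : d < ({o}ᶜ : Finset ι).card)
    (hb : UnimodularOn S {k | k.sign = true ∨ k = ⟨o, false⟩} b) :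
    ∃ c, EOReach ({o}ᶜ : Finset ι).card b c ∧
      UnimodularOn S Set.univ fun k => c ⟨k, true⟩ := by
  have hoK := notMem_compl_singleton_idx o false
  obtain ⟨c, hc⟩ := exists_forall_mem_of_disjoint hS ho (fun k => b ⟨k, true⟩) (b ⟨o, false⟩ ^ 2)
  refine ⟨_, eoReach_eichler (s := true) (c := fun k => c k * b ⟨o, false⟩) hoK,
    unimodularOn_iff.mpr fun P hP hPS => ?_⟩
  by_contra! hmem
  have hadd : ∀ k ∈ ({o}ᶜ : Finset ι), b ⟨k, true⟩ + c k * b ⟨o, false⟩ ^ 2 ∈ P := by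
    intro k hk
    simpa [eichler_apply_of_mem hoK hk, pow_two, mul_assoc] using hmem k trivial
  have hbo : b ⟨o, false⟩ ∈ P := hP.mem_of_pow_mem 2 (hc P hP hPS hadd)
  obtain ⟨⟨k, s⟩, hks, hkP⟩ := unimodularOn_iff.mp hb P hP hPS
  rcases hks with rfl | hk
  · refine hkP ?_
    rcases eq_or_ne k o with rfl | hko
    · have := hmem k trivial
      rw [eichler_apply_of_neg_eq (by simp)] at this
      refine (P.sub_mem_iff_left (P.sum_mem fun l _ => ?_)).mp this
      exact P.mul_mem_right _ (P.mul_mem_left _ hbo)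
    · refine (P.add_mem_iff_left ?_).mp (hadd k (by simpa using hko))
      exact P.mul_mem_left _ (P.pow_mem_of_mem hbo 2 two_pos)
  · exact hkP (hk ▸ hbo)

theorem exists_eoReach_unimodularOn_true_compl_singleton [IsNoetherianRing A] {d : ℕ}
    (hS : ∀ P : Ideal A, P.IsPrime → Disjoint (P : Set A) S → P.height ≤ d)
    (ho : d < ({o}ᶜ : Finset ι).card) (hb : UnimodularOn S Set.univ fun k => b ⟨k, true⟩) :
    ∃ c, EOReach ({o}ᶜ : Finset ι).card b c ∧ UnimodularOn S {o}ᶜ fun k => c ⟨k, true⟩ := by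
  have hoK := notMem_compl_singleton_idx o true
  obtain ⟨c, hc⟩ := exists_forall_mem_of_disjoint hS ho (fun k => b ⟨k, true⟩) (b ⟨o, true⟩)
  refine ⟨_, eoReach_eichler (s := true) (c := c) hoK, unimodularOn_iff.mpr fun P hP hPS => ?_⟩
  by_contra! hmem
  have hadd : ∀ k ∈ ({o}ᶜ : Finset ι), b ⟨k, true⟩ + c k * b ⟨o, true⟩ ∈ P := by
    intro k hk
    simpa [eichler_apply_of_mem hoK hk] using hmem k (by simpa using hk)
  have hbo : b ⟨o, true⟩ ∈ P := hc P hP hPS hadd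
  obtain ⟨k, -, hkP⟩ := unimodularOn_iff.mp hb P hP hPS
  refine hkP ?_
  rcases eq_or_ne k o with rfl | hko
  · exact hbo
  · exact (P.add_mem_iff_left (P.mul_mem_left _ hbo)).mp (hadd k (by simpa using hko))

theorem exists_eoReach_unimodularOn [IsNoetherianRing A] {d : ℕ}
    (hheight : ∀ P : Ideal A, P.IsPrime → Disjoint (P : Set A) S → P.height ≤ d)
    (hadd : ∀ σ ∈ S, ∀ a, ∃ g, a + g * σ ∈ S) (hd : d + 2 ≤ Fintype.card ι)
    (hb : Ideal.span (Set.range b) = ⊤) :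
    ∃ c, EOReach (4 * (Fintype.card ι - 1)) b c ∧ UnimodularOn S {o}ᶜ fun k => c ⟨k, true⟩ := by
  have hcard : ({o}ᶜ : Finset ι).card = Fintype.card ι - 1 := by simp [Finset.card_compl]
  have ho : d < ({o}ᶜ : Finset ι).card := by lia
  obtain ⟨b₁, hr₁, hb₁⟩ := exists_eoReach_unimodularOn_compl_singleton hheight ho hb
  obtain ⟨b₂, hr₂, hb₂⟩ := exists_eoReach_unimodularOn_true_or_eq hadd hb₁
  obtain ⟨b₃, hr₃, hb₃⟩ := exists_eoReach_unimodularOn_true hheight ho hb₂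
  obtain ⟨b₄, hr₄, hb₄⟩ := exists_eoReach_unimodularOn_true_compl_singleton hheight ho hb₃
  exact ⟨b₄, (((hr₁.trans hr₂).trans hr₃).trans hr₄).mono (by lia), hb₄⟩

theorem eoReach_single_of_apply_eq_one (ho : b ⟨o, true⟩ = 1) (hq : splitForm b = 0) :
    EOReach (2 * (Fintype.card ι - 1)) b (Pi.single ⟨o, true⟩ 1) := by
  have hoK := notMem_compl_singleton_idx o true
  have hpos := eoReach_eichler (s := true) (c := fun k => -b ⟨k, true⟩) (b := b) hoK
  set b₁ := eichler ⟨o, true⟩ true {o}ᶜ (fun k => -b ⟨k, true⟩) b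
  have hneg := eoReach_eichler (s := false) (c := fun k => -b₁ ⟨k, false⟩) (b := b₁) hoK
  have ho₁ : b₁ ⟨o, true⟩ = 1 := by rw [← ho]; exact eichler_apply_of_ne (by simp) (by simp)
  convert (hpos.trans hneg).mono (N := 2 * (Fintype.card ι - 1)) (by simp [Finset.card_compl]; lia)
    using 1
  have hq₂ := (hpos.trans hneg).splitForm_eq.trans hq
  set b₂ := eichler ⟨o, true⟩ false {o}ᶜ (fun k => -b₁ ⟨k, false⟩) b₁
  have ho₂ : b₂ ⟨o, true⟩ = 1 := by rw [← ho₁]; exact eichler_apply_of_ne (by simp) (by simp)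
  have htrue : ∀ k ≠ o, b₂ ⟨k, true⟩ = 0 := by
    intro k hk
    rw [show b₂ ⟨k, true⟩ = b₁ ⟨k, true⟩ from eichler_apply_of_ne (by simp [hk]) (by simp),
      show b₁ ⟨k, true⟩ = _ from eichler_apply_of_mem hoK (by simpa using hk), ho]
    ring
  have hfalse : ∀ k ≠ o, b₂ ⟨k, false⟩ = 0 := by
    intro k hk
    rw [show b₂ ⟨k, false⟩ = _ from eichler_apply_of_mem hoK (by simpa using hk), ho₁]
    ring
  rw [splitForm, Fintype.sum_eq_single o fun k hk => by rw [htrue k hk, zero_mul], ho₂,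
    one_mul] at hq₂
  ext ⟨k, _ | _⟩ <;> rcases eq_or_ne k o with rfl | hk <;> simp_all

theorem exists_eichler_apply_eq_sub_mul {g : A}
    (hg : g ∈ Ideal.span ((fun k => b ⟨k, true⟩) '' {o}ᶜ)) (w : A) :
    ∃ c : ι → A, eichler ⟨o, false⟩ false {o}ᶜ (fun k => w * c k) b ⟨o, true⟩ =
      b ⟨o, true⟩ - w * g := by
  rw [← Finset.coe_singleton, ← Finset.coe_compl] at hg
  obtain ⟨c, rfl⟩ := (Submodule.mem_span_image_finset_iff_exists_fun' A).mp hg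
  exact ⟨c, by simp [eichler_apply_of_neg_eq, Finset.mul_sum, mul_assoc]⟩

theorem eoReach_single_of_one_mem_span
    (hb : 1 ∈ Ideal.span ((fun k => b ⟨k, true⟩) '' {o}ᶜ)) (hq : splitForm b = 0) :
    EOReach (3 * (Fintype.card ι - 1)) b (Pi.single ⟨o, true⟩ 1) := by
  obtain ⟨c, hc⟩ := exists_eichler_apply_eq_sub_mul hb (b ⟨o, true⟩ - 1)
  have hrow := eoReach_eichler (s := false) (b := b) (c := fun k => (b ⟨o, true⟩ - 1) * c k)
    (notMem_compl_singleton_idx o false)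
  rw [mul_one, sub_sub_cancel] at hc
  exact (hrow.trans (eoReach_single_of_apply_eq_one hc (hrow.splitForm_eq.trans hq))).mono
    (by simp [Finset.card_compl]; lia)

theorem eoReach_single_of_ringKrullDim_le [IsNoetherianRing A] {d : ℕ} (hdim : ringKrullDim A ≤ d)
    (hd : d + 2 ≤ Fintype.card ι) (hb : Ideal.span (Set.range b) = ⊤) (hq : splitForm b = 0) :
    EOReach (7 * (Fintype.card ι - 1)) b (Pi.single ⟨o, true⟩ 1) := by
  obtain ⟨c, hr, g, hg, hc⟩ := exists_eoReach_unimodularOn (S := ⊥) (o := o)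
    (fun P _ _ => height_le_of_ringKrullDim_le hdim P)
    (fun σ hσ a => ⟨1 - a, by simp [Submonoid.mem_bot.mp hσ]⟩) hd hb
  rw [Submonoid.mem_bot.mp hg] at hc
  exact (hr.trans (eoReach_single_of_one_mem_span hc (hr.splitForm_eq.trans hq))).mono (by lia)

end StableRange

section Core

variable {ι A : Type*} [DecidableEq ι] [CommRing A]

theorem exists_eoReach_sub_crossProduct (a : Fin 3 ↪ ι) (s : Bool) (p : Fin 3 → A)
    (b : SignedIndex ι → A) :
    ∃ c, EOReach 3 b c ∧
      (fun t => c ⟨a t, s⟩) = (fun t => b ⟨a t, s⟩) - p ⨯₃ (fun t => b ⟨a t, !s⟩) ∧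
      ∀ k, (∀ t, k ≠ ⟨a t, s⟩) → c k = b k := by
  have ha : ∀ {t t'}, t ≠ t' → a t ≠ a t' := a.injective.ne
  have h₁ := EOReach.single (i := ⟨a 0, s⟩) (j := ⟨a 1, !s⟩) (ha (by decide)) (p 2) b
  have h₂ := EOReach.single (i := ⟨a 1, s⟩) (j := ⟨a 2, !s⟩) (ha (by decide)) (p 0)
    (transvect ⟨a 0, s⟩ ⟨a 1, !s⟩ (p 2) b)
  have h₃ := EOReach.single (i := ⟨a 2, s⟩) (j := ⟨a 0, !s⟩) (ha (by decide)) (p 1)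
    (transvect ⟨a 1, s⟩ ⟨a 2, !s⟩ (p 0) (transvect ⟨a 0, s⟩ ⟨a 1, !s⟩ (p 2) b))
  refine ⟨_, (h₁.trans h₂).trans h₃, ?_, fun k hk => ?_⟩
  · ext t
    fin_cases t <;> simp [transvect, cross_apply] <;> ring
  · simp [transvect, hk]

-- The cross product transvections of `p` on the positive entries and of `w` on the negative ones
-- combine to a commutator: if `p ⬝ w = 0`, then
-- `v - p ×₃ n + p ×₃ (n - w ×₃ (v - p ×₃ n)) = v - (p ⬝ v) w`.
theorem exists_eoReach_sub_dotProduct_smul (a : Fin 3 ↪ ι) {p w : Fin 3 → A} (hpw : p ⬝ᵥ w = 0)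
    {δ : A} (hw : ∀ t, δ ∣ w t) (b : SignedIndex ι → A) :
    ∃ c, EOReach 9 b c ∧
      (fun t => c ⟨a t, true⟩) =
        (fun t => b ⟨a t, true⟩) - (p ⬝ᵥ fun t => b ⟨a t, true⟩) • w ∧
      ∀ k, δ ∣ c k - b k := by
  obtain ⟨b₁, h₁, hpos₁, hoff₁⟩ := exists_eoReach_sub_crossProduct a true p b
  obtain ⟨b₂, h₂, hneg₂, hoff₂⟩ := exists_eoReach_sub_crossProduct a false w b₁
  obtain ⟨b₃, h₃, hpos₃, hoff₃⟩ := exists_eoReach_sub_crossProduct a true (-p) b₂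
  have hneg₁ : (fun t => b₁ ⟨a t, false⟩) = fun t => b ⟨a t, false⟩ :=
    funext fun t => hoff₁ _ (by simp)
  have hpos₂ : (fun t => b₂ ⟨a t, true⟩) = fun t => b₁ ⟨a t, true⟩ :=
    funext fun t => hoff₂ _ (by simp)
  have hneg₃ : (fun t => b₃ ⟨a t, false⟩) = fun t => b₂ ⟨a t, false⟩ :=
    funext fun t => hoff₃ _ (by simp)
  have hpos : (fun t => b₃ ⟨a t, true⟩) =
      (fun t => b ⟨a t, true⟩) - (p ⬝ᵥ fun t => b ⟨a t, true⟩) • w := by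
    have hdot : (p ⬝ᵥ fun t => b₁ ⟨a t, true⟩) = p ⬝ᵥ fun t => b ⟨a t, true⟩ := by
      rw [hpos₁, dotProduct_sub, dot_self_cross, sub_zero]
    rw [hpos₃, hpos₂, Bool.not_true, hneg₂, hneg₁, Bool.not_false, map_neg, LinearMap.neg_apply,
      map_sub, cross_cross_eq_smul_sub_smul', hdot, dotProduct_comm w, hpw, hpos₁, Bool.not_true]
    module
  have hneg : (fun t => b₃ ⟨a t, false⟩) =
      (fun t => b ⟨a t, false⟩) - w ⨯₃ fun t => b₁ ⟨a t, true⟩ := by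
    rw [hneg₃, hneg₂, hneg₁, Bool.not_false]
  refine ⟨b₃, (h₁.trans h₂).trans h₃, hpos, fun k => ?_⟩
  by_cases hk : k.idx ∈ Set.range a
  · obtain ⟨k, s⟩ := k
    obtain ⟨t, rfl⟩ := hk
    cases s with
    | true =>
      rw [show b₃ ⟨a t, true⟩ = _ from congr_fun hpos t]
      simpa using (hw t).mul_left _
    | false =>
      rw [show b₃ ⟨a t, false⟩ = _ from congr_fun hneg t]
      have hcross : ∀ x : Fin 3 → A, ∀ t, δ ∣ (w ⨯₃ x) t := by
        intro x t
        rw [cross_apply]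
        fin_cases t <;> exact dvd_sub ((hw _).mul_right _) ((hw _).mul_right _)
      simpa using hcross _ t
  · have hne : ∀ s t, k ≠ ⟨a t, s⟩ := fun s t h => hk ⟨t, h ▸ rfl⟩
    rw [hoff₃ k (hne true), hoff₂ k (hne false), hoff₁ k (hne true), sub_self]
    exact dvd_zero δ

theorem exists_eoReach_apply_eq_apply_eq (a : Fin 3 ↪ ι) {b b' : SignedIndex ι → A} {s η u v : A}
    (hb : ∀ k, s ^ 3 * η ∣ b' k - b k) (hs : u * b ⟨a 0, true⟩ + v * b ⟨a 1, true⟩ = s) :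
    ∃ c, EOReach 9 b c ∧ c ⟨a 0, true⟩ = b' ⟨a 0, true⟩ ∧ c ⟨a 1, true⟩ = b' ⟨a 1, true⟩ ∧
      ∀ k, s * η ∣ b' k - c k := by
  obtain ⟨z₀, hz₀⟩ := hb ⟨a 0, true⟩
  obtain ⟨z₁, hz₁⟩ := hb ⟨a 1, true⟩
  set x := 1 - b ⟨a 2, true⟩
  let p : Fin 3 → A := ![x * u, x * v, s]
  let w : Fin 3 → A := (s * η) • ![-(s * z₀), -(s * z₁), x * (u * z₀ + v * z₁)]
  have hpw : p ⬝ᵥ w = 0 := by simp [p, w, Fin.sum_univ_three, dotProduct]; ring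
  have hpb : (p ⬝ᵥ fun t => b ⟨a t, true⟩) = s := by
    simp [p, x, Fin.sum_univ_three, dotProduct]
    linear_combination (1 - b ⟨a 2, true⟩) * hs
  obtain ⟨c, hr, hpos, hdvd⟩ :=
    exists_eoReach_sub_dotProduct_smul a hpw (fun t => Dvd.intro _ rfl) b
  rw [hpb] at hpos
  refine ⟨c, hr, ?_, ?_, fun k => ?_⟩
  · rw [show c ⟨a 0, true⟩ = _ from congr_fun hpos 0]
    simp [w]
    linear_combination -hz₀
  · rw [show c ⟨a 1, true⟩ = _ from congr_fun hpos 1]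
    simp [w]
    linear_combination -hz₁
  · have hb' : s * η ∣ b' k - b k := Dvd.dvd.trans ⟨s ^ 2, by ring⟩ (hb k)
    simpa using dvd_sub hb' (hdvd k)

theorem exists_eoReach_forall_mem_apply_eq {a₁ a₂ : ι} {K : Finset ι} (ha₁ : a₁ ∉ K) (ha₂ : a₂ ∉ K)
    (t : Bool) {b b' : SignedIndex ι → A} {s η u v : A}
    (hs : u * b ⟨a₁, true⟩ + v * b ⟨a₂, true⟩ = s) (hb : ∀ k ∈ K, s * η ∣ b' ⟨k, t⟩ - b ⟨k, t⟩) :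
    ∃ c, EOReach (2 * K.card) b c ∧ (∀ k ∈ K, c ⟨k, t⟩ = b' ⟨k, t⟩) ∧
      (∀ k, k ≠ ⟨a₁, false⟩ → k ≠ ⟨a₂, false⟩ → (k.sign = t → k.idx ∉ K) → c k = b k) ∧
      ∀ k, η ∣ c k - b k := by
  have heichler : ∀ (i : SignedIndex ι) (b : SignedIndex ι → A) (e : ι → A) k,
      η ∣ eichler i t K (η • e) b k - b k := by
    intro i b e k
    unfold eichler
    split_ifs
    · simp [mul_assoc, ← Finset.mul_sum]
    · simp [mul_assoc]
    · simp
  choose! e he using hb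
  have h₁ := eoReach_eichler (i := ⟨a₁, true⟩) (s := t) (c := η • (fun k => u * e k)) (b := b) ha₁
  set b₁ := eichler ⟨a₁, true⟩ t K (η • fun k => u * e k) b
  have h₂ := eoReach_eichler (i := ⟨a₂, true⟩) (s := t) (c := η • (fun k => v * e k)) (b := b₁) ha₂
  have hb₁ : b₁ ⟨a₂, true⟩ = b ⟨a₂, true⟩ :=
    eichler_apply_of_ne (by simp) fun _ => ha₂
  refine ⟨_, (h₁.trans h₂).mono (by lia), fun k hk => ?_, fun k hk₁ hk₂ hk => ?_, fun k => ?_⟩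
  · rw [eichler_apply_of_mem ha₂ hk, show b₁ ⟨k, t⟩ = _ from eichler_apply_of_mem ha₁ hk, hb₁]
    simp only [Pi.smul_apply, smul_eq_mul]
    linear_combination (η * e k) * hs - he k hk
  · rw [eichler_apply_of_ne hk₂ hk]
    exact eichler_apply_of_ne hk₁ hk
  · rw [← sub_add_sub_cancel]
    exact dvd_add (heichler ⟨a₂, true⟩ b₁ _ k) (heichler ⟨a₁, true⟩ b _ k)

theorem exists_eoReach_eq_off_two [Fintype ι] (a : Fin 3 ↪ ι) {b b' : SignedIndex ι → A}
    {s η u v u' v' : A} (hb : ∀ k, s ^ 3 * η ∣ b' k - b k)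
    (hs : u * b ⟨a 0, true⟩ + v * b ⟨a 1, true⟩ = s)
    (hs' : u' * b' ⟨a 0, true⟩ + v' * b' ⟨a 1, true⟩ = s) :
    ∃ c, EOReach (4 * Fintype.card ι + 1) b c ∧
      (∀ k, k ≠ ⟨a 0, false⟩ → k ≠ ⟨a 1, false⟩ → c k = b' k) ∧ ∀ k, η ∣ b' k - c k := by
  set K : Finset ι := {a 0, a 1}ᶜ
  have h₀ : a 0 ∉ K := by simp [K]
  have h₁ : a 1 ∉ K := by simp [K]
  have hcard : 3 ≤ Fintype.card ι := by simpa using Fintype.card_le_of_embedding a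
  have hK : K.card = Fintype.card ι - 2 := by
    rw [Finset.card_compl, Finset.card_pair (a.injective.ne (by decide))]
  obtain ⟨c, hc, hc₀, hc₁, hdc⟩ := exists_eoReach_apply_eq_apply_eq a hb hs
  obtain ⟨d, hd, hdK, hdoff, hdd⟩ := exists_eoReach_forall_mem_apply_eq h₀ h₁ true
    (by rwa [hc₀, hc₁]) fun k _ => hdc ⟨k, true⟩
  have hd₀ : d ⟨a 0, true⟩ = b' ⟨a 0, true⟩ := by
    rw [hdoff _ (by simp) (by simp) fun _ => h₀, hc₀]
  have hd₁ : d ⟨a 1, true⟩ = b' ⟨a 1, true⟩ := by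
    rw [hdoff _ (by simp) (by simp) fun _ => h₁, hc₁]
  have hdfalse : ∀ k ∈ K, d ⟨k, false⟩ = c ⟨k, false⟩ := by
    refine fun k hk => hdoff _ ?_ ?_ (by simp) <;> simp [ne_of_mem_of_not_mem hk, h₀, h₁]
  obtain ⟨f, hf, hfK, hfoff, hdf⟩ := exists_eoReach_forall_mem_apply_eq h₀ h₁ false
    (by rwa [hd₀, hd₁]) fun k hk => hdfalse k hk ▸ hdc ⟨k, false⟩
  refine ⟨f, ((hc.trans hd).trans hf).mono (by lia), ?_, fun k => ?_⟩
  · rintro ⟨k, _ | _⟩ hk₀ hk₁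
    · exact hfK k (by simpa [K] using And.intro hk₀ hk₁)
    · rw [hfoff _ hk₀ hk₁ (by simp)]
      by_cases hk : k ∈ K
      · exact hdK k hk
      · obtain rfl | rfl : k = a 0 ∨ k = a 1 := by
          simpa [K, or_iff_not_imp_left] using hk
        exacts [hd₀, hd₁]
  · have := dvd_sub ((dvd_mul_left η s).trans (hdc k)) ((hdd k).add (hdf k))
    convert this using 1
    ring

theorem eoReach_of_eq_add_mul {a₁ a₂ : ι} (ha : a₁ ≠ a₂) {b b' : SignedIndex ι → A}
    {s u v e₁ e₂ : A} (hb : ∀ k, k ≠ ⟨a₁, false⟩ → k ≠ ⟨a₂, false⟩ → b k = b' k)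
    (h₁ : b' ⟨a₁, false⟩ = b ⟨a₁, false⟩ + s * e₁) (h₂ : b' ⟨a₂, false⟩ = b ⟨a₂, false⟩ + s * e₂)
    (he : b ⟨a₁, true⟩ * e₁ + b ⟨a₂, true⟩ * e₂ = 0)
    (hs : u * b ⟨a₁, true⟩ + v * b ⟨a₂, true⟩ = s) : EOReach 1 b b' := by
  convert EOReach.single (i := ⟨a₁, false⟩) (j := ⟨a₂, true⟩) ha (v * e₁ - u * e₂) b using 1
  ext k
  rcases eq_or_ne k ⟨a₁, false⟩ with rfl | hk₁
  · rw [transvect_apply_left ha, h₁]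
    linear_combination u * he - e₁ * hs
  rcases eq_or_ne k ⟨a₂, false⟩ with rfl | hk₂
  · rw [← Bool.not_true, ← SignedIndex.neg_mk, transvect_apply_neg_right ha]
    simp only [SignedIndex.neg_mk, Bool.not_true, Bool.not_false]
    rw [h₂]
    linear_combination v * he - e₂ * hs
  · rw [transvect_apply_of_ne hk₁ hk₂, hb k hk₁ hk₂]

open Polynomial in
theorem eoReach_eval_add_pow_four_mul [Fintype ι] (a : Fin 3 ↪ ι) {b : SignedIndex ι → A[X]}
    (hq : splitForm b = 0) {s : A} {u v : A[X]}
    (hs : u * b ⟨a 0, true⟩ + v * b ⟨a 1, true⟩ = C s) (τ y : A) :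
    EOReach (4 * Fintype.card ι + 2) (fun k => (b k).eval τ)
      fun k => (b k).eval (τ + s ^ 4 * y) := by
  let φ : A[X] →+* A[X] := compRingHom (C τ + C s ^ 3 * X)
  let φ₀ : A[X] →+* A[X] := C.comp (evalRingHom τ)
  let ψ : A[X] →+* A := evalRingHom (s * y)
  have hdvd : ∀ k, C s ^ 3 * X ∣ φ (b k) - φ₀ (b k) := by
    intro k
    have := sub_dvd_eval_sub (C τ + C s ^ 3 * X) (C τ) ((b k).map C)
    rw [eval_map, eval_map, add_sub_cancel_left, eval₂_at_apply] at this
    exact this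
  have hφ : φ u * φ (b ⟨a 0, true⟩) + φ v * φ (b ⟨a 1, true⟩) = C s := by
    simpa [φ] using congr(φ $hs)
  have hφ₀ : φ₀ u * φ₀ (b ⟨a 0, true⟩) + φ₀ v * φ₀ (b ⟨a 1, true⟩) = C s := by
    simpa [φ₀] using congr(φ₀ $hs)
  obtain ⟨c, hr, hoff, hX⟩ := exists_eoReach_eq_off_two a hdvd hφ₀ hφ
  choose e he using hX
  have ha : a 0 ≠ a 1 := a.injective.ne (by decide)
  have hrel : φ (b ⟨a 0, true⟩) * e ⟨a 0, false⟩ + φ (b ⟨a 1, true⟩) * e ⟨a 1, false⟩ = 0 := by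
    have := mul_sub_add_mul_sub_eq_zero ha hoff
      (by rw [hr.splitForm_eq, map_splitForm, map_splitForm, hq, map_zero, map_zero])
    rw [he, he] at this
    refine isRegular_X.left ?_
    linear_combination this
  have hψ : ∀ k, ψ (φ (b k)) = ψ (c k) + s * (y * ψ (e k)) := by
    intro k
    have hψX : ψ X = s * y := by simp [ψ]
    rw [← sub_eq_iff_eq_add', ← map_sub, he, map_mul, hψX, mul_assoc]
  have hlast : EOReach 1 (fun k => ψ (c k)) fun k => ψ (φ (b k)) := by
    refine eoReach_of_eq_add_mul ha (fun k h₀ h₁ => by rw [hoff k h₀ h₁]) (hψ _) (hψ _) ?_ ?_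
      (u := ψ (φ u)) (v := ψ (φ v))
    · rw [hoff _ (by simp) (by simp), hoff _ (by simp) (by simp)]
      have := congr(ψ $hrel)
      simp only [map_add, map_mul, map_zero] at this
      linear_combination y * this
    · rw [hoff _ (by simp) (by simp), hoff _ (by simp) (by simp)]
      simpa [ψ] using congr(ψ $hφ)
  convert (hr.map ψ).trans hlast using 1
  · ext k
    simp [ψ, φ₀]
  · ext k
    simp [ψ, φ, eval_comp]
    ring_nf

end Core

section PrimesOver

open Polynomial

variable {A : Type*} [CommRing A] {F : Set (Ideal A)} {h : A[X]}

theorem eq_of_le_of_comap_C_le {I J : Ideal A[X]} [I.IsPrime] (hh : h.Monic) (hI : h ∈ I)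
    (hIJ : I ≤ J) (hC : J.comap C ≤ I.comap C) : I = J := by
  by_contra hne
  obtain ⟨x, hxJ, hxI⟩ := SetLike.exists_of_lt (lt_of_le_of_ne hIJ hne)
  obtain ⟨p, hp, hpx⟩ := hh.quotient_isIntegral hI (Ideal.Quotient.mk I x)
  have hpI : p.eval₂ C x ∈ I := by
    rw [← Ideal.Quotient.eq_zero_iff_mem, hom_eval₂, ← hpx]
    rfl
  exact (Ideal.comap_lt_comap_of_root_mem_sdiff (f := (C : A →+* A[X])) hIJ ⟨hxJ, hxI⟩
    (map_monic_ne_zero hp) hpI).not_ge hC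

theorem exists_isPrime_comap_C_eq {I : Ideal A[X]} {p : Ideal A} [p.IsPrime] (hh : h.Monic)
    (hI : h ∈ I) (hp : I.comap C ≤ p) : ∃ Q : Ideal A[X], Q.IsPrime ∧ I ≤ Q ∧ Q.comap C = p := by
  have hintegral : Algebra.IsIntegral A (A[X] ⧸ I) := ⟨hh.quotient_isIntegral hI⟩
  obtain ⟨Q, -, hQ, hQp⟩ := Ideal.exists_ideal_over_prime_of_isIntegral (S := A[X] ⧸ I) p ⊥
    fun x hx => hp ((Ideal.Quotient.eq_zero_iff_mem (I := I)).mp hx)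
  refine ⟨Q.comap (Ideal.Quotient.mk I), Ideal.IsPrime.comap _, fun x hx => ?_, hQp⟩
  rw [Ideal.mem_comap, Ideal.Quotient.eq_zero_iff_mem.mpr hx]
  exact Q.zero_mem

/-- The primes of `A[X]` that contain `h` and contract to a member of `F`. For monic `h` and a
finite antichain `F` of primes they stand in for the maximal ideals of a semilocal ring. -/
def primesOver (F : Set (Ideal A)) (h : A[X]) : Set (Ideal A[X]) :=
  {m | m.IsPrime ∧ m.comap C ∈ F ∧ h ∈ m}

theorem isAntichain_primesOver (hF : IsAntichain (· ≤ ·) F) (hh : h.Monic) :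
    IsAntichain (· ≤ ·) (primesOver F h) := by
  rintro m ⟨hm, hmF, hhm⟩ m' ⟨-, hmF', -⟩ hne hle
  exact hne (eq_of_le_of_comap_C_le hh hhm hle (hF.eq hmF hmF' (Ideal.comap_mono hle)).ge)

theorem finite_primesOver [IsNoetherianRing A] (hF : F.Finite) (hh : h.Monic) :
    (primesOver F h).Finite := by
  refine (hF.biUnion fun p _ => Ideal.finite_minimalPrimes_of_isNoetherianRing A[X]
    (p.map C ⊔ Ideal.span {h})).subset ?_
  rintro m ⟨hm, hmF, hhm⟩
  have hle : (m.comap C).map C ⊔ Ideal.span {h} ≤ m :=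
    sup_le Ideal.map_comap_le ((Ideal.span_singleton_le_iff_mem _).mpr hhm)
  obtain ⟨q, hq, hqm⟩ := Ideal.exists_minimalPrimes_le hle
  have := hq.1.1
  obtain rfl : q = m := eq_of_le_of_comap_C_le hh
    (hq.1.2 (Ideal.mem_sup_right (Ideal.mem_span_singleton_self h))) hqm
    (Ideal.le_comap_of_map_le (le_sup_left.trans hq.1.2))
  exact Set.mem_biUnion hmF hq

theorem exists_mul_add_mul_eq_C (hF : F.Finite) (hprime : ∀ p ∈ F, p.IsPrime) (hh : h.Monic)
    {f : A[X]} (hf : ∀ m ∈ primesOver F h, f ∉ m) :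
    ∃ s, (∀ p ∈ F, s ∉ p) ∧ ∃ u v, u * h + v * f = C s := by
  set I : Ideal A[X] := Ideal.span {h, f}
  have hhI : h ∈ I := Ideal.subset_span (by simp)
  have hfI : f ∈ I := Ideal.subset_span (by simp)
  have hnot : ¬ ((I.comap C : Ideal A) : Set A) ⊆ ⋃ p ∈ F, (p : Set A) := by
    rw [Ideal.subset_union_prime_finite hF (f := fun p : Ideal A => p) ⊥ ⊥
      fun p hp _ _ => hprime p hp]
    rintro ⟨p, hp, hle⟩
    have := hprime p hp
    obtain ⟨Q, hQ, hIQ, rfl⟩ := exists_isPrime_comap_C_eq hh hhI hle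
    exact hf Q ⟨hQ, hp, hIQ hhI⟩ (hIQ hfI)
  obtain ⟨s, hs, hsF⟩ := Set.not_subset.mp hnot
  exact ⟨s, by simpa using hsF, Ideal.mem_span_pair.mp hs⟩

end PrimesOver

section SemilocalReduction

variable {ι A : Type*} [DecidableEq ι] [CommRing A]

section

variable {M : Set (Ideal A)} {b : SignedIndex ι → A}

theorem exists_eoReach_forall_apply_notMem (hfin : M.Finite) (hprime : ∀ m ∈ M, m.IsPrime)
    (hanti : IsAntichain (· ≤ ·) M) {i : SignedIndex ι} {K : Finset (SignedIndex ι)}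
    (hK : ∀ k ∈ K, k.idx ≠ i.idx) (hb : ∀ m ∈ M, b i ∉ m ∨ ∃ k ∈ K, b k ∉ m) :
    ∃ c, EOReach K.card b c ∧ (∀ k, k.idx ≠ i.idx → -k ∉ K → c k = b k) ∧ ∀ m ∈ M, c i ∉ m := by
  induction K using Finset.induction_on generalizing b with
  | empty => exact ⟨b, .refl _ _, fun _ _ _ => rfl, by simpa using hb⟩
  | insert j K hj ih =>
    have hij : i.idx ≠ j.idx := (hK j (Finset.mem_insert_self j K)).symm
    obtain ⟨x, hx⟩ := exists_mem_iff_not_of_isAntichain hfin hprime hanti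
      fun m => b i ∈ m ∧ b j ∉ m
    obtain ⟨c, hc, hcb, hcM⟩ := ih (b := transvect i j x b)
      (fun k hk => hK k (Finset.mem_insert_of_mem hk)) fun m hm => by
        by_cases hxm : x ∈ m
        · simp only [transvect_apply_mem_iff hxm]
          have := hb m hm
          have := (hx m hm).mp hxm
          simp only [Finset.mem_insert, exists_eq_or_imp] at *
          tauto
        · obtain ⟨hbi, hbj⟩ := not_not.mp fun h => hxm ((hx m hm).mpr h)
          rw [transvect_apply_left hij, Ideal.add_mem_iff_right _ hbi]
          exact .inl fun h => ((hprime m hm).mem_or_mem h).elim hxm hbj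
    refine ⟨c, ?_, fun k hki hkK => ?_, hcM⟩
    · rw [Finset.card_insert_of_notMem hj]
      exact .step i j x hij hc
    · obtain ⟨hkj, hkK⟩ : -k ≠ j ∧ -k ∉ K := by simpa using hkK
      rw [hcb k hki hkK, transvect_apply_of_ne (SignedIndex.ne_of_idx_ne hki)]
      exact fun h => hkj (neg_eq_iff_eq_neg.mpr h)

theorem exists_eoReach_forall_apply_notMem_of_idx_ne [Fintype ι] (hfin : M.Finite)
    (hprime : ∀ m ∈ M, m.IsPrime) (hanti : IsAntichain (· ≤ ·) M) (a : Fin 3 ↪ ι)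
    (hb : ∀ m ∈ M, ∃ k : SignedIndex ι, k.idx ≠ a 0 ∧ b k ∉ m) :
    ∃ c, EOReach (2 * Fintype.card ι - 3) b c ∧ c ⟨a 0, true⟩ = b ⟨a 0, true⟩ ∧
      ∀ m ∈ M, c ⟨a 1, true⟩ ∉ m := by
  set K : Finset (SignedIndex ι) := Finset.image₂ .mk {a 0, a 1}ᶜ Finset.univ
  have mem_K : ∀ k, k ∈ K ↔ k.idx ≠ a 0 ∧ k.idx ≠ a 1 := by
    rintro ⟨k, s⟩
    cases s <;> simp [K]
  have hcard : 3 ≤ Fintype.card ι := by simpa using Fintype.card_le_of_embedding a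
  have hK : K.card ≤ (Fintype.card ι - 2) * 2 := by
    refine (Finset.card_image₂_le _ _ _).trans_eq ?_
    rw [Finset.card_compl, Finset.card_pair (a.injective.ne (by decide)), Finset.card_univ,
      Fintype.card_bool]
  have h₂₀ : a 2 ≠ a 0 := a.injective.ne (by decide)
  have h₂₁ : a 2 ≠ a 1 := a.injective.ne (by decide)
  have h₀₁ : a 0 ≠ a 1 := a.injective.ne (by decide)
  obtain ⟨x, hx⟩ := exists_mem_iff_not_of_isAntichain hfin hprime hanti
    fun m => ∀ k : SignedIndex ι, k.idx ≠ a 0 → k ≠ ⟨a 1, false⟩ → b k ∈ m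
  have hstep := EOReach.single (i := ⟨a 2, true⟩) (j := ⟨a 1, false⟩) h₂₁ x b
  obtain ⟨c, hc, hcb, hcM⟩ := exists_eoReach_forall_apply_notMem hfin hprime hanti
    (i := ⟨a 1, true⟩) (K := K) (b := transvect ⟨a 2, true⟩ ⟨a 1, false⟩ x b)
    (fun k hk => ((mem_K k).mp hk).2) fun m hm => by
      by_cases hxm : x ∈ m
      · simp only [transvect_apply_mem_iff hxm]
        by_contra! hcon
        refine (hx m hm).mp hxm ?_
        rintro ⟨k, s⟩ hk₀ hk₁
        rcases eq_or_ne k (a 1) with rfl | hk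
        · cases s
          exacts [absurd rfl hk₁, hcon.1]
        · exact hcon.2 ⟨k, s⟩ ((mem_K _).mpr ⟨hk₀, hk⟩)
      · have hbm := not_not.mp fun h => hxm ((hx m hm).mpr h)
        obtain ⟨k, hk₀, hk⟩ := hb m hm
        obtain rfl : k = ⟨a 1, false⟩ := not_not.mp fun h => hk (hbm k hk₀ h)
        refine .inr ⟨⟨a 2, true⟩, (mem_K _).mpr ⟨h₂₀, h₂₁⟩, ?_⟩
        rw [transvect_apply_left h₂₁, Ideal.add_mem_iff_right _ (hbm _ h₂₀ (by simp))]
        exact fun h => ((hprime m hm).mem_or_mem h).elim hxm hk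
  refine ⟨c, (hstep.trans hc).mono (by lia), ?_, hcM⟩
  rw [hcb _ h₀₁ fun h => ((mem_K _).mp h).1 rfl,
    transvect_apply_of_ne (by simp [h₂₀.symm]) (by simp [h₀₁])]

end

open Polynomial

variable [IsNoetherianRing A] {F : Set (Ideal A)} {b : SignedIndex ι → A[X]} {g : A[X]}

theorem exists_eoReach_monic_forall_primesOver (hfin : F.Finite) (hanti : IsAntichain (· ≤ ·) F)
    {a₁ a₂ : ι} (ha : a₁ ≠ a₂) (hb : Ideal.span (Set.range b) = ⊤) (hg : g.Monic)
    (hgb : g ∈ Ideal.span ((fun k => b ⟨k, true⟩) '' {a₁}ᶜ)) (hmonic : (b ⟨a₁, true⟩).Monic)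
    (hdeg : g.natDegree + (b ⟨a₂, true⟩).natDegree < (b ⟨a₁, true⟩).natDegree) :
    ∃ c, EOReach 1 b c ∧ (c ⟨a₁, true⟩).Monic ∧
      ∀ m ∈ primesOver F (c ⟨a₁, true⟩), ∃ k : SignedIndex ι, k.idx ≠ a₁ ∧ c k ∉ m := by
  obtain ⟨x, hx⟩ := exists_mem_iff_not_of_isAntichain (finite_primesOver hfin hg)
    (fun m hm => hm.1) (isAntichain_primesOver hanti hg) (b ⟨a₂, false⟩ ∈ ·)
  set y := x %ₘ g
  have mem_iff : ∀ m ∈ primesOver F g, y ∈ m ↔ b ⟨a₂, false⟩ ∉ m := by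
    intro m hm
    rw [← hx m hm, ← modByMonic_add_div x g, Ideal.add_mem_iff_left _ (m.mul_mem_right _ hm.2.2)]
  have hc := EOReach.single (i := ⟨a₁, true⟩) (j := ⟨a₂, true⟩) ha y b
  set c := transvect ⟨a₁, true⟩ ⟨a₂, true⟩ y b
  have hc₁ : c ⟨a₁, true⟩ = b ⟨a₁, true⟩ + y * b ⟨a₂, true⟩ := transvect_apply_left ha
  have hc₂ : c ⟨a₂, false⟩ = b ⟨a₂, false⟩ - y * b ⟨a₁, false⟩ := transvect_apply_neg_right ha
  have hcb : ∀ k : SignedIndex ι, k ≠ ⟨a₁, true⟩ → k ≠ ⟨a₂, false⟩ → c k = b k :=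
    fun k hk₁ hk₂ => transvect_apply_of_ne hk₁ hk₂
  refine ⟨c, hc, ?_, ?_⟩
  · rw [hc₁]
    refine hmonic.add_of_left (degree_lt_degree ?_)
    have := natDegree_mul_le (p := y) (q := b ⟨a₂, true⟩)
    have := natDegree_modByMonic_le x hg
    lia
  rintro m ⟨hm, hmF, hcm₁⟩
  by_contra! hcm
  have hgm : g ∈ m := by
    refine Ideal.span_le.mpr ?_ hgb
    rintro _ ⟨k, hk, rfl⟩
    have hcmk := hcm ⟨k, true⟩ hk
    rwa [hcb _ (by simpa using hk) (by simp)] at hcmk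
  have hbm₁ : b ⟨a₁, false⟩ ∉ m := by
    intro hbm
    refine hm.ne_top (top_le_iff.mp ?_)
    rw [← hb, ← hc.span_range_eq, Ideal.span_le]
    rintro _ ⟨⟨k, s⟩, rfl⟩
    rcases eq_or_ne k a₁ with rfl | hk
    · cases s
      exacts [hcb ⟨k, false⟩ (by simp) (by simp [ha]) ▸ hbm, hcm₁]
    · exact hcm ⟨k, s⟩ hk
  have hbm₂ : b ⟨a₂, false⟩ - y * b ⟨a₁, false⟩ ∈ m := hc₂ ▸ hcm ⟨a₂, false⟩ ha.symm
  by_cases hym : y ∈ m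
  · refine (mem_iff m ⟨hm, hmF, hgm⟩).mp hym ?_
    rwa [Submodule.sub_mem_iff_left _ (m.mul_mem_right _ hym)] at hbm₂
  · have hbm : b ⟨a₂, false⟩ ∈ m := not_not.mp fun h => hym ((mem_iff m ⟨hm, hmF, hgm⟩).mpr h)
    rw [Submodule.sub_mem_iff_right _ hbm] at hbm₂
    exact (hm.mem_or_mem hbm₂).elim hym hbm₁

theorem exists_eoReach_mul_add_mul_eq_C [Fintype ι] (hfin : F.Finite)
    (hprime : ∀ p ∈ F, p.IsPrime) (hanti : IsAntichain (· ≤ ·) F) (a : Fin 3 ↪ ι)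
    (hb : Ideal.span (Set.range b) = ⊤) (hg : g.Monic)
    (hgb : g ∈ Ideal.span ((fun k => b ⟨k, true⟩) '' {a 0}ᶜ)) (hmonic : (b ⟨a 0, true⟩).Monic)
    (hdeg : g.natDegree + (b ⟨a 1, true⟩).natDegree < (b ⟨a 0, true⟩).natDegree) :
    ∃ c, EOReach (2 * Fintype.card ι - 2) b c ∧ ∃ s, (∀ p ∈ F, s ∉ p) ∧
      ∃ u v, u * c ⟨a 0, true⟩ + v * c ⟨a 1, true⟩ = C s := by
  have hcard : 3 ≤ Fintype.card ι := by simpa using Fintype.card_le_of_embedding a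
  obtain ⟨c, hc, hc_monic, hcF⟩ := exists_eoReach_monic_forall_primesOver hfin hanti
    (a.injective.ne (by decide)) hb hg hgb hmonic hdeg
  obtain ⟨d, hd, hd₀, hdF⟩ := exists_eoReach_forall_apply_notMem_of_idx_ne
    (finite_primesOver hfin hc_monic) (fun m hm => hm.1) (isAntichain_primesOver hanti hc_monic)
    a hcF
  exact ⟨d, (hc.trans hd).mono (by lia),
    exists_mul_add_mul_eq_C hfin hprime (hd₀ ▸ hc_monic) (hd₀ ▸ hdF)⟩

end SemilocalReduction

section PolynomialColumns

theorem span_range_map_eq_top {κ A B : Type*} [CommRing A] [CommRing B] (φ : A →+* B) {b : κ → A}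
    (hb : Ideal.span (Set.range b) = ⊤) : Ideal.span (Set.range fun k => φ (b k)) = ⊤ := by
  rw [← Function.comp_def, Set.range_comp, ← Ideal.map_span, hb, Ideal.map_top]

variable {ι A : Type*} [DecidableEq ι] [CommRing A]

section

open Polynomial

theorem eoReach_eval_add_of_mem_ofList {b : SignedIndex ι → A[X]} {N : ℕ} {L : List A}
    (hL : ∀ s ∈ L, ∀ τ y, EOReach N (fun k => (b k).eval τ) fun k => (b k).eval (τ + s * y))
    {x : A} (hx : x ∈ Ideal.ofList L) (τ : A) :
    EOReach (L.length * N) (fun k => (b k).eval τ) fun k => (b k).eval (τ + x) := by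
  induction L generalizing x τ with
  | nil =>
    obtain rfl : x = 0 := by simpa using hx
    rw [add_zero]
    exact .refl _ _
  | cons s L ih =>
    rw [Ideal.ofList_cons, Submodule.mem_sup] at hx
    obtain ⟨_, hy, z, hz, rfl⟩ := hx
    obtain ⟨y, rfl⟩ := Ideal.mem_span_singleton.mp hy
    have htail := ih (fun s hs => hL s (List.mem_cons_of_mem _ hs)) hz (τ + s * y)
    rw [← add_assoc]
    exact ((hL s List.mem_cons_self τ y).trans htail).mono (by rw [List.length_cons]; lia)

variable [Fintype ι] [IsNoetherianRing A] {d : ℕ} {b : SignedIndex ι → A[X]} {g : A[X]}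

theorem eoReach_eval_add (hdim : ringKrullDim A ≤ d) (a : Fin 3 ↪ ι) (hq : splitForm b = 0)
    (hb : Ideal.span (Set.range b) = ⊤) (hg : g.Monic)
    (hgb : g ∈ Ideal.span ((fun k => b ⟨k, true⟩) '' {a 0}ᶜ)) (hmonic : (b ⟨a 0, true⟩).Monic)
    (hdeg : g.natDegree + (b ⟨a 1, true⟩).natDegree < (b ⟨a 0, true⟩).natDegree) (τ x : A) :
    EOReach ((d + 1) * (8 * Fintype.card ι - 2)) (fun k => (b k).eval τ)
      fun k => (b k).eval (τ + x) := by
  have hcard : 3 ≤ Fintype.card ι := by simpa using Fintype.card_le_of_embedding a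
  obtain ⟨L, hlength, hL, htop⟩ := exists_list_ofList_eq_top hdim
    {s | ∀ τ y, EOReach (8 * Fintype.card ι - 2) (fun k => (b k).eval τ)
      fun k => (b k).eval (τ + s * y)} fun F hfin hprime hanti => by
    obtain ⟨c, hc, s, hs, u, v, huv⟩ :=
      exists_eoReach_mul_add_mul_eq_C hfin hprime hanti a hb hg hgb hmonic hdeg
    refine ⟨s ^ 4, fun τ y => ?_, fun p hp h => hs p hp ((hprime p hp).mem_of_pow_mem _ h)⟩
    have hcore := eoReach_eval_add_pow_four_mul a (hc.splitForm_eq.trans hq) huv τ y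
    have hc_eval := fun t : A => hc.map (evalRingHom t)
    exact (((hc_eval τ).trans hcore).trans (hc_eval _).symm).mono (by lia)
  rw [← hlength]
  exact eoReach_eval_add_of_mem_ofList hL (htop ▸ Submodule.mem_top) τ

theorem eoReach_eval_eval [Nontrivial A] (hdim : ringKrullDim A ≤ d) (a : Fin 3 ↪ ι)
    (hq : splitForm b = 0) (hb : Ideal.span (Set.range b) = ⊤) (hg : g.Monic)
    (hgb : g ∈ Ideal.span ((fun k => b ⟨k, true⟩) '' {a 0}ᶜ)) (τ τ' : A) :
    EOReach ((d + 1) * (8 * Fintype.card ι - 2)) (fun k => (b k).eval τ)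
      fun k => (b k).eval τ' := by
  set L := (b ⟨a 0, true⟩).natDegree + (b ⟨a 1, true⟩).natDegree
  set w : A[X] := X ^ L * ((X - C τ) * (X - C τ'))
  have hw : w.Monic := (monic_X_pow L).mul ((monic_X_sub_C τ).mul (monic_X_sub_C τ'))
  have hw_natDegree : w.natDegree = L + 2 := by
    rw [(monic_X_pow L).natDegree_mul ((monic_X_sub_C τ).mul (monic_X_sub_C τ')),
      (monic_X_sub_C τ).natDegree_mul (monic_X_sub_C τ'), natDegree_X_pow, natDegree_X_sub_C,
      natDegree_X_sub_C]
  obtain ⟨h, hh⟩ := exists_eichler_apply_eq_sub_mul hgb (-w)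
  have hc := eoReach_eichler (s := false) (b := b) (c := fun k => -w * h k)
    (notMem_compl_singleton_idx (a 0) false)
  set c := eichler ⟨a 0, false⟩ false {a 0}ᶜ (fun k => -w * h k) b with hc_def
  have hcb : ∀ k ≠ a 0, c ⟨k, true⟩ = b ⟨k, true⟩ :=
    fun k hk => eichler_apply_of_ne (by simp [hk]) (by simp)
  have hc_eval : ∀ t, w.eval t = 0 → (fun k => (c k).eval t) = fun k => (b k).eval t := by
    intro t ht
    ext k
    rw [hc_def, eichler]
    split_ifs <;> simp [eval_finsetSum, ht]
  have hwg : (w * g).natDegree = L + 2 + g.natDegree := by rw [hw.natDegree_mul hg, hw_natDegree]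
  have hlt : (b ⟨a 0, true⟩).natDegree < (w * g).natDegree := by lia
  rw [neg_mul, sub_neg_eq_add] at hh
  have := eoReach_eval_add hdim a (hc.splitForm_eq.trans hq) (hc.span_range_eq.trans hb) hg
    (by rwa [Set.image_congr (s := {a 0}ᶜ) hcb])
    (by rw [hh]; exact (hw.mul hg).add_of_right (degree_lt_degree hlt))
    (by
      rw [hh, hcb _ (a.injective.ne (by decide)), natDegree_add_eq_right_of_natDegree_lt hlt]
      lia)
    τ (τ' - τ)
  rwa [add_sub_cancel, hc_eval τ (by simp [w]), hc_eval τ' (by simp [w])] at this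

end

variable [Fintype ι] {K : Type*} [CommRing K] [IsNoetherianRing K] {n D : ℕ}
  {b : SignedIndex ι → MvPolynomial (Fin n) K}

theorem eoReach_C_constantCoeff [Nontrivial K] (hdim : ringKrullDim K ≤ D) (a : Fin 3 ↪ ι)
    (hq : splitForm b = 0) (hb : Ideal.span (Set.range b) = ⊤)
    (hmonic : UnimodularOn (lexMonic K n) {a 0}ᶜ fun k => b ⟨k, true⟩) :
    EOReach ((D + n + 1) * (8 * Fintype.card ι - 2)) b
      fun k => MvPolynomial.C (MvPolynomial.constantCoeff (b k)) := by
  obtain ⟨g, hg, hgb⟩ := hmonic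
  obtain ⟨m, hm⟩ := exists_monic_homotopy n g (mem_lexMonic.mp hg)
    (MvPolynomial.X (R := K))
  let θ := RingHomClass.toRingHom (homotopy K (MvPolynomial.X (R := K)) m)
  have hdim' : ringKrullDim (MvPolynomial (Fin n) K) ≤ (D + n : ℕ) := by
    rw [MvPolynomial.ringKrullDim_of_isNoetherianRing, Nat.cast_add, Nat.card_fin]
    exact add_le_add_left hdim _
  have hspan := Ideal.mem_map_of_mem θ hgb
  rw [Ideal.map_span, Set.image_image] at hspan
  have := eoReach_eval_eval hdim' a (by rw [map_splitForm, hq, map_zero])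
    (span_range_map_eq_top θ hb) hm hspan 1 0
  simpa [θ, eval_one_homotopy, eval_zero_homotopy] using this

theorem eoReach_single (hdim : ringKrullDim K ≤ D) (a : Fin 3 ↪ ι) (hD : D + 2 ≤ Fintype.card ι)
    (hq : splitForm b = 0) (hb : Ideal.span (Set.range b) = ⊤) :
    EOReach (11 * (Fintype.card ι - 1) + (D + n + 1) * (8 * Fintype.card ι - 2)) b
      (Pi.single ⟨a 0, true⟩ 1) := by
  cases subsingleton_or_nontrivial K
  · rw [Subsingleton.elim b]
    exact .refl _ _
  obtain ⟨c, hc, hmonic⟩ := exists_eoReach_unimodularOn (o := a 0) (S := lexMonic K n)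
    (fun P _ hP => height_le_of_disjoint_lexMonic hdim P hP)
    (fun _ hσ x => exists_add_mul_mem_lexMonic hσ x) hD hb
  have hcq := hc.splitForm_eq.trans hq
  have hcb := hc.span_range_eq.trans hb
  have hconst := eoReach_C_constantCoeff hdim a hcq hcb hmonic
  have hbase := eoReach_single_of_ringKrullDim_le (o := a 0) hdim hD
    (span_range_map_eq_top MvPolynomial.constantCoeff hcb) (by rw [map_splitForm, hcq, map_zero])
  convert ((hc.trans hconst).trans (hbase.map (MvPolynomial.C (σ := Fin n)))).mono _ using 1
  · ext1 k
    rw [Pi.single_apply, Pi.single_apply]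
    split_ifs <;> simp
  · lia

end PolynomialColumns

section Matrices

variable {R : Type*} [CommRing R] {r : ℕ}

/-- The position of the basis vector `e_i` in the ordered basis `e_1,…,e_r,e_{-r},…,e_{-1}`. -/
def position (i : SignedIndex (Fin r)) : Fin (2 * r) :=
  ⟨if i.sign then i.idx.val else 2 * r - 1 - i.idx.val, by split_ifs <;> lia⟩

theorem position_injective : Function.Injective (position (r := r)) := by
  rintro ⟨i, _ | _⟩ ⟨j, _ | _⟩ h <;> simp [position, Fin.ext_iff] at h ⊢ <;> lia

theorem position_surjective : Function.Surjective (position (r := r)) := by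
  intro k
  by_cases hk : k.val < r
  · exact ⟨⟨⟨k, hk⟩, true⟩, rfl⟩
  · exact ⟨⟨⟨2 * r - 1 - k, by lia⟩, false⟩, by simp [position, Fin.ext_iff]; lia⟩

theorem position_neg (i : SignedIndex (Fin r)) : position (-i) = negE r (position i) := by
  rcases i with ⟨i, _ | _⟩ <;> simp [position, negE]
  lia

theorem quadE_eq_splitForm (b : Fin (2 * r) → R) : quadE r b = splitForm (b ∘ position) := rfl

theorem TE_mulVec_comp_position (i j : SignedIndex (Fin r)) (ξ : R) (b : Fin (2 * r) → R) :
    (TE r (position i) (position j) ξ *ᵥ b) ∘ position = transvect i j ξ (b ∘ position) := by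
  ext k
  simp [TE, transvect, sub_mulVec, add_mulVec, single_mulVec, Function.update_apply,
    ← position_neg, position_injective.eq_iff]

theorem isElemE_TE_position {i j : SignedIndex (Fin r)} (hij : i.idx ≠ j.idx) (ξ : R) :
    IsElemE r (TE r (position i) (position j) ξ) := by
  obtain ⟨hne, hne_neg⟩ := SignedIndex.idx_ne_iff.mp hij
  refine ⟨_, _, ξ, position_injective.ne hne, ?_, rfl⟩
  rw [← position_neg]
  exact position_injective.ne hne_neg

theorem exists_mem_EOE_mulVec_eq {N : ℕ} {b c : Fin (2 * r) → R}
    (h : EOReach N (b ∘ position) (c ∘ position)) : ∃ E ∈ EOE r N R, E *ᵥ b = c := by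
  generalize hb : b ∘ position = b', hc : c ∘ position = c' at h
  induction h generalizing b with
  | refl =>
    subst hb
    exact ⟨1, ⟨[], by simp⟩, by rw [one_mulVec, position_surjective.injective_comp_right hc]⟩
  | step i j ξ hij _ ih =>
    subst hb
    obtain ⟨_, ⟨L, hlength, hL, rfl⟩, hE⟩ := ih (TE_mulVec_comp_position i j ξ b) hc
    refine ⟨L.prod * TE r (position i) (position j) ξ,
      ⟨L ++ [TE r (position i) (position j) ξ], by simpa using hlength, fun m hm => ?_, by simp⟩,
      by rw [← mulVec_mulVec, hE]⟩
    rcases List.mem_append.mp hm with hm | hm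
    · exact hL m hm
    · rw [List.mem_singleton.mp hm]
      exact isElemE_TE_position hij ξ

theorem ite_val_eq_zero_comp_position (h : 0 < r) :
    (fun i : Fin (2 * r) => if i.val = 0 then (1 : R) else 0) ∘ position =
      Pi.single ⟨⟨0, h⟩, true⟩ 1 := by
  ext k
  rw [Pi.single_apply]
  exact if_congr (by rw [← position_injective.eq_iff, Fin.ext_iff]; rfl) rfl rfl

end Matrices

theorem eleven_mul_add_mul_le {n D r : ℕ} (hr : 3 ≤ r) (hD : D + 2 ≤ r) :
    11 * (r - 1) + (D + n + 1) * (8 * r - 2) ≤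
      n * (11 * r - 7) +
        (n * D + r * (r - 1) / 2) * (r * (r - 1) / 2 + (r - 1 + 1) / 2 + 8 * r - 2) +
          8 * r - 8 := by
  have hT : r ≤ r * (r - 1) / 2 := by
    rw [Nat.le_div_iff_mul_le two_pos]
    exact Nat.mul_le_mul_left r (by lia)
  have hproduct : (D + 2) * (8 * r - 2) ≤
      (n * D + r * (r - 1) / 2) * (r * (r - 1) / 2 + (r - 1 + 1) / 2 + 8 * r - 2) :=
    Nat.mul_le_mul (by lia) (by lia)
  have hlinear : n * (8 * r - 2) ≤ n * (11 * r - 7) := Nat.mul_le_mul_left n (by lia)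
  lia

/-- Bounded reduction of isotropic unimodular columns (even case): for any
`b ∈ IUm_{2r}(C[x_1,…,x_n])`, the first standard basis column `e_1` lies in
`EO(2r,A)^{≤N} · b` with
`N = n(11r−7) + (nD + r(r−1)/2)(r(r−1)/2 + ⌈(r−1)/2⌉ + 8r−2) + 8r−8`. -/
theorem even_column_bounded_reduction
    (C : Type*) [CommRing C] [IsNoetherianRing C] (n D : ℕ)
    (hdim : ringKrullDim C = (D : WithBot ℕ∞))
    (r : ℕ) (hr : max 3 (D + 2) ≤ r)
    (b : Fin (2 * r) → MvPolynomial (Fin n) C)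
    (hb : b ∈ IUmE r (MvPolynomial (Fin n) C)) :
    ∃ E ∈ EOE r
        (n * (11 * r - 7) +
          (n * D + r * (r - 1) / 2) * (r * (r - 1) / 2 + (r - 1 + 1) / 2 + 8 * r - 2) +
            8 * r - 8)
        (MvPolynomial (Fin n) C),
      E.mulVec b = fun i : Fin (2 * r) => if i.val = 0 then 1 else 0 := by
  obtain ⟨hr3, hrD⟩ := max_le_iff.mp hr
  obtain ⟨hspan, hq⟩ := hb
  rw [quadE_eq_splitForm] at hq
  have hspan' : Ideal.span (Set.range (b ∘ position)) = ⊤ := by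
    rwa [position_surjective.range_comp]
  have hreach := eoReach_single hdim.le (Fin.castLEEmb hr3) (by simpa using hrD) hq hspan'
  rw [Fintype.card_fin] at hreach
  apply exists_mem_EOE_mulVec_eq
  rw [ite_val_eq_zero_comp_position (by lia)]
  exact hreach.mono (eleven_mul_add_mul_le hr3 hrD)
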